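/- arXiv:1606.09389 — 3 statements merged into one kernel-verified Lean document; each statement's English description precedes it below -/
import Mathlib

section
/- Let H be a finite graph whose maximum degree Δ(H) is even and differs from its minimum degree by at most 2, and let G be the full subdivision of H. Then G admits a cyclic interval Δ(G)-coloring (note Δ(G) = Δ(H) when Δ(H) ≥ 2). -/
open SimpleGraph

/-- The set of colors appearing on edges incident to `v` under the edge coloring `c`. -/
def colorsAt {V : Type*} (G : SimpleGraph V) (c : Sym2 V → ℕ) (v : V) : Set ℕ :=
  c '' (G.incidenceSet v)

/-- A set of natural numbers is an interval of consecutive integers. -/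
def IsIntervalSet (S : Set ℕ) : Prop := ∃ a b : ℕ, S = Set.Icc a b

/-- A proper edge coloring of `G` with colors `1, …, t`: every edge gets a color in
`{1, …, t}` and distinct edges sharing a vertex get distinct colors. -/
def IsProperEdgeColoring {V : Type*} (G : SimpleGraph V) (t : ℕ) (c : Sym2 V → ℕ) : Prop :=
  (∀ e ∈ G.edgeSet, c e ∈ Set.Icc 1 t) ∧
  ∀ e₁ ∈ G.edgeSet, ∀ e₂ ∈ G.edgeSet, e₁ ≠ e₂ → (∃ v, v ∈ e₁ ∧ v ∈ e₂) → c e₁ ≠ c e₂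

/-- A cyclic interval `t`-coloring of `G`: a proper edge coloring with colors `1, …, t`
such that at every vertex the set of incident colors, or its complement in `{1, …, t}`,
is an interval of consecutive integers. -/
def IsCyclicIntervalColoring {V : Type*} (G : SimpleGraph V) (t : ℕ) (c : Sym2 V → ℕ) : Prop :=
  IsProperEdgeColoring G t c ∧
  ∀ v : V, IsIntervalSet (colorsAt G c v) ∨ IsIntervalSet (Set.Icc 1 t \ colorsAt G c v)

/-- The full subdivision of `H`: the bipartite graph on `V(H) ⊕ E(H)` where
`v : V(H)` is adjacent to `e : E(H)` iff `v` is an endpoint of `e`. -/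
def fullSubdivision {V : Type*} (H : SimpleGraph V) : SimpleGraph (V ⊕ H.edgeSet) :=
  SimpleGraph.fromRel (fun x y =>
    ∃ (v : V) (e : H.edgeSet), v ∈ (e : Sym2 V) ∧ x = Sum.inl v ∧ y = Sum.inr e)

noncomputable instance {V : Type*} (H : SimpleGraph V) :
    DecidableRel (fullSubdivision H).Adj := Classical.decRel _

/-!
Edges of the full subdivision are half-edges of `H`. Let `H` have maximum degree `2k`. If `H` were
`2k`-regular, Petersen's theorem would split it into `k` directed `2`-factors; giving the two halves
of every edge of the `i`-th factor the colors `2i + 1` at the tail and `2i + 2` at the head uses all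
`2k` colors at every vertex, and two consecutive colors at every edge. In general `H` is first made
`2k`-regular by adding edges to the vertices of smaller degree: the vertices of degree `2k - 1`,
which are even in number, are matched in pairs, and each vertex of degree `2k - 2` receives a loop.
The added half-edges at a vertex all lie on a single edge, so the colors missing at that vertex in
`H` form an interval.
-/

section

open Finset Function

theorem bijOn_preimage_singleton {D A X : Type*} {f : D → A} {r : D → X}
    (h : Bijective fun d => (f d, r d)) (a : A) : Set.BijOn r (f ⁻¹' {a}) Set.univ := by
  refine ⟨Set.mapsTo_univ _ _, fun d hd d' hd' hr => ?_, fun x _ => ?_⟩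
  · exact h.injective (Prod.ext (hd.trans hd'.symm) hr)
  · obtain ⟨d, hd⟩ := h.surjective (a, x)
    exact ⟨d, congrArg Prod.fst hd, congrArg Prod.snd hd⟩

section RegularMaps

variable {D A : Type*} [DecidableEq A]

/-- Every fiber of `f` inside `s` has exactly `k` elements. If `s` is the edge set of a bipartite
multigraph and `f` sends each edge to its end in one of the two parts, this says that all vertices
of that part have degree `k`. -/
def IsRegularOn (f : D → A) (s : Finset D) (k : ℕ) : Prop :=
  ∀ a, #{d ∈ s | f d = a} = k

namespace IsRegularOn

variable {X : Type*} {f : D → A} {s M : Finset D} {k l : ℕ}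

theorem card_filter_mem (hf : IsRegularOn f s k) (S : Finset A) :
    #{d ∈ s | f d ∈ S} = #S * k := by
  rw [← sum_card_fiberwise_eq_card_filter, sum_const_nat fun a _ => hf a]

theorem card_eq [Fintype A] (hf : IsRegularOn f s k) : #s = Fintype.card A * k := by
  simpa using hf.card_filter_mem univ

theorem injOn (hf : IsRegularOn f s 1) : Set.InjOn f s := fun d hd d' hd' h =>
  card_le_one.1 (hf (f d')).le d (mem_filter.2 ⟨hd, h⟩) d' (mem_filter.2 ⟨hd', rfl⟩)

theorem sdiff [DecidableEq D] (hs : IsRegularOn f s (k + l)) (hM : IsRegularOn f M l)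
    (hMs : M ⊆ s) : IsRegularOn f (s \ M) k := fun a => by
  have hsub : {d ∈ M | f d = a} ⊆ {d ∈ s | f d = a} := filter_subset_filter _ hMs
  have hsplit : {d ∈ s \ M | f d = a} = {d ∈ s | f d = a} \ {d ∈ M | f d = a} := by grind
  rw [hsplit, card_sdiff_of_subset hsub, hs, hM, Nat.add_sub_cancel]

theorem image_of_bijective [DecidableEq D] [Fintype X] {m : X → D} (hm : Bijective (f ∘ m)) :
    IsRegularOn f (univ.image m) 1 := fun a => by
  obtain ⟨b, rfl, hb⟩ := hm.existsUnique a
  refine card_eq_one.2 ⟨m b, ?_⟩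
  ext d
  simp only [mem_filter, mem_image, mem_univ, true_and, mem_singleton]
  constructor
  · rintro ⟨⟨b', rfl⟩, h⟩
    rw [hb b' h]
  · rintro rfl
    exact ⟨⟨b, rfl⟩, rfl⟩

variable {B : Type*} [DecidableEq B] {g : D → B}

theorem card_le_card_biUnion_image (hf : IsRegularOn f s k) (hg : IsRegularOn g s k) (hk : 0 < k)
    (S : Finset A) : #S ≤ #(S.biUnion fun a => {d ∈ s | f d = a}.image g) := by
  set U := S.biUnion fun a => {d ∈ s | f d = a}.image g
  have hsub : {d ∈ s | f d ∈ S} ⊆ {d ∈ s | g d ∈ U} := fun d hd => by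
    obtain ⟨hds, hdS⟩ := mem_filter.1 hd
    exact mem_filter.2 ⟨hds, mem_biUnion.2
      ⟨f d, hdS, mem_image_of_mem g (mem_filter.2 ⟨hds, rfl⟩)⟩⟩
  have hcard : #S * k ≤ #U * k := by
    rw [← hf.card_filter_mem, ← hg.card_filter_mem]
    exact card_le_card hsub
  exact Nat.le_of_mul_le_mul_right hcard hk

theorem exists_perfectMatching [Finite A] [Finite B] (hf : IsRegularOn f s k)
    (hg : IsRegularOn g s k) (hk : 0 < k) :
    ∃ M ⊆ s, IsRegularOn f M 1 ∧ IsRegularOn g M 1 := by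
  classical
  cases nonempty_fintype A
  cases nonempty_fintype B
  obtain ⟨p, hp, hps⟩ := (all_card_le_biUnion_card_iff_exists_injective _).1
    (hf.card_le_card_biUnion_image hg hk)
  have hcard : Fintype.card A = Fintype.card B :=
    Nat.eq_of_mul_eq_mul_right hk (hf.card_eq.symm.trans hg.card_eq)
  have hpbij : Bijective p := (Fintype.bijective_iff_injective_and_card p).2 ⟨hp, hcard⟩
  simp only [mem_image, mem_filter] at hps
  choose m hm hgm using hps
  refine ⟨univ.image m, image_subset_iff.2 fun a _ => (hm a).1, image_of_bijective ?_,
    image_of_bijective ?_⟩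
  · rw [show f ∘ m = id from funext fun a => (hm a).2]
    exact bijective_id
  · rwa [show g ∘ m = p from funext hgm]

theorem injOn_prodMk_piecewise [DecidableEq D] (hM : IsRegularOn f M 1) {c : D → ℕ}
    (hck : ∀ d ∈ s \ M, c d < k) (hc : Set.InjOn (fun d => (f d, c d)) ↑(s \ M)) :
    Set.InjOn (fun d => (f d, M.piecewise (fun _ => k) c d)) s := by
  intro d hd d' hd' h
  obtain ⟨hfd, hcd⟩ := Prod.mk.inj h
  have hrest : ∀ x ∈ s, x ∉ M → x ∈ s \ M := fun x hx hxM => mem_sdiff.2 ⟨hx, hxM⟩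
  by_cases hdM : d ∈ M <;> by_cases hdM' : d' ∈ M <;>
    simp only [hdM, hdM', piecewise_eq_of_mem, piecewise_eq_of_notMem, not_false_eq_true] at hcd
  · exact hM.injOn hdM hdM' hfd
  · exact absurd hcd (hck d' (hrest d' hd' hdM')).ne'
  · exact absurd hcd (hck d (hrest d hd hdM)).ne
  · exact hc (hrest d hd hdM) (hrest d' hd' hdM') (Prod.ext hfd hcd)

theorem exists_edgeColoring_injOn [Finite A] [Finite B]
    (hf : IsRegularOn f s k) (hg : IsRegularOn g s k) :
    ∃ c : D → ℕ, (∀ d ∈ s, c d < k) ∧ Set.InjOn (fun d => (f d, c d)) s ∧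
      Set.InjOn (fun d => (g d, c d)) s := by
  classical
  induction k generalizing s with
  | zero =>
    cases nonempty_fintype A
    obtain rfl : s = ∅ := card_eq_zero.1 hf.card_eq
    simp
  | succ k ih =>
    obtain ⟨M, hMs, hfM, hgM⟩ := hf.exists_perfectMatching hg k.succ_pos
    obtain ⟨c, hck, hfc, hgc⟩ := ih (hf.sdiff hfM hMs) (hg.sdiff hgM hMs)
    refine ⟨M.piecewise (fun _ => k) c, fun d hd => ?_, hfM.injOn_prodMk_piecewise hck hfc,
      hgM.injOn_prodMk_piecewise hck hgc⟩
    by_cases hdM : d ∈ M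
    · simp [hdM]
    · simpa [hdM] using (hck d (mem_sdiff.2 ⟨hd, hdM⟩)).le

theorem bijective_prodMk [Fintype D] [Finite A] (hf : IsRegularOn f univ k) {c : D → Fin k}
    (hc : Injective fun d => (f d, c d)) : Bijective fun d => (f d, c d) := by
  cases nonempty_fintype A
  refine (Fintype.bijective_iff_injective_and_card _).2 ⟨hc, ?_⟩
  rw [Fintype.card_prod, Fintype.card_fin, ← hf.card_eq, card_univ]

/-- **König's edge coloring theorem** for regular bipartite multigraphs. -/
theorem exists_edgeColoring [Fintype D] [Finite A] [Finite B]
    (hf : IsRegularOn f univ k) (hg : IsRegularOn g univ k) :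
    ∃ c : D → Fin k, (Bijective fun d => (f d, c d)) ∧ Bijective fun d => (g d, c d) := by
  obtain ⟨c, hck, hfc, hgc⟩ := hf.exists_edgeColoring_injOn hg
  refine ⟨fun d => ⟨c d, hck d (mem_univ d)⟩, hf.bijective_prodMk fun d d' h => ?_,
    hg.bijective_prodMk fun d d' h => ?_⟩
  · exact hfc (mem_univ d) (mem_univ d') (by simpa [Fin.ext_iff] using h)
  · exact hgc (mem_univ d) (mem_univ d') (by simpa [Fin.ext_iff] using h)

variable [Fintype X]

theorem of_bijective [Fintype D] {r : D → X} (h : Bijective fun d => (f d, r d)) :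
    IsRegularOn f univ (Fintype.card X) := fun a => by
  have hr : Set.BijOn r ({d | f d = a} : Finset D) (univ : Finset X) := by
    simpa using! bijOn_preimage_singleton h a
  exact hr.finsetCard_eq

theorem exists_bijective [Fintype D] (hf : IsRegularOn f univ (Fintype.card X)) :
    ∃ r : D → X, Bijective fun d => (f d, r d) := by
  have hfiber : ∀ a, Fintype.card {d // f d = a} = Fintype.card X := fun a => by
    rw [Fintype.card_subtype, hf]
  let e := fun a => Fintype.equivOfCardEq (hfiber a)
  exact ⟨fun d => e (f d) ⟨d, rfl⟩, ((Equiv.sigmaFiberEquiv f).symm.trans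
    ((Equiv.sigmaCongrRight e).trans (Equiv.sigmaEquivProd A X))).bijective⟩

end IsRegularOn

end RegularMaps

section Multigraphs

/-! A finite multigraph with loops is encoded by its darts (half-edges) `D`, each of which lies on
the edge `ε d : E` and starts at the vertex `β d : V`; so `ε` takes every value exactly twice. -/

variable {D E V J Y : Type*}

theorem bijective_prodMk_snd_iff (φ : D ≃ E × J) (F : D → Y) :
    (Bijective fun d => (F d, (φ d).2)) ↔ ∀ j, Bijective fun e => F (φ.symm (e, j)) := by
  constructor
  · refine fun h j => ⟨fun e e' hF => ?_, fun y => ?_⟩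
    · have := h.injective (a₁ := φ.symm (e, j)) (a₂ := φ.symm (e', j)) (Prod.ext hF (by simp))
      simpa using this
    · obtain ⟨d, hd⟩ := h.surjective (y, j)
      obtain ⟨rfl, rfl⟩ := Prod.mk.inj hd
      exact ⟨(φ d).1, by simp⟩
  · refine fun h => ⟨fun d d' hd => ?_, fun ⟨y, j⟩ => ?_⟩
    · obtain ⟨hF, hj⟩ := Prod.mk.inj hd
      have hd : φ.symm ((φ d).1, (φ d').2) = d := by rw [← hj, Prod.mk.eta, φ.symm_apply_apply]
      have hE : (φ d).1 = (φ d').1 := (h (φ d').2).injective (by simpa [hd] using hF)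
      exact φ.injective (Prod.ext hE hj)
    · obtain ⟨e, rfl⟩ := (h j).surjective y
      exact ⟨φ.symm (e, j), by simp⟩

variable [Fintype D] [DecidableEq E] [DecidableEq V] {ε : D → E} {β : D → V} {k : ℕ}

theorem exists_balanced_orientation [Finite E] [Finite V] (hε : IsRegularOn ε univ 2)
    (hβ : IsRegularOn β univ (2 * k)) :
    ∃ (o : D → Fin 2) (r : D → Fin k), (Bijective fun d => (ε d, o d)) ∧
      Bijective fun d => ((β d, r d), o d) := by
  obtain ⟨r, hr⟩ := IsRegularOn.exists_bijective (X := Fin k × Fin 2) (f := β) (by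
    simpa [mul_comm] using hβ)
  let γ : D → V × Fin k := fun d => (β d, (r d).1)
  have hγ : IsRegularOn γ univ 2 := by
    simpa using IsRegularOn.of_bijective (f := γ) (r := fun d => (r d).2)
      ((Equiv.prodAssoc V (Fin k) (Fin 2)).symm.bijective.comp hr)
  obtain ⟨o, hεo, hγo⟩ := hε.exists_edgeColoring hγ
  exact ⟨o, fun d => (r d).1, hεo, hγo⟩

/-- **Petersen's 2-factor theorem**. -/
theorem exists_twoFactorization [Finite E] [Finite V] (hε : IsRegularOn ε univ 2)
    (hβ : IsRegularOn β univ (2 * k)) :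
    ∃ (o : D → Fin 2) (c : E → Fin k), (Bijective fun d => (ε d, o d)) ∧
      Bijective fun d => ((β d, c (ε d)), o d) := by
  cases nonempty_fintype E
  obtain ⟨o, r, hεo, hβo⟩ := exists_balanced_orientation hε hβ
  let φ : D ≃ E × Fin 2 := Equiv.ofBijective _ hεo
  let endpoint (j : Fin 2) (e : E) : V := β (φ.symm (e, j))
  have hreg (j : Fin 2) : IsRegularOn (endpoint j) univ k := by
    simpa using IsRegularOn.of_bijective ((bijective_prodMk_snd_iff φ _).1 hβo j)
  obtain ⟨c, h₀, h₁⟩ := (hreg 0).exists_edgeColoring (hreg 1)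
  refine ⟨o, c, hεo, (bijective_prodMk_snd_iff φ fun d => (β d, c (ε d))).2 fun j => ?_⟩
  have hε_symm (e : E) : ε (φ.symm (e, j)) = e := congrArg Prod.fst (φ.apply_symm_apply (e, j))
  simp only [hε_symm]
  fin_cases j
  exacts [h₀, h₁]

theorem bijOn_two_mul_add (k : ℕ) : Set.BijOn (fun p : Fin k × Fin 2 => 2 * (p.1 : ℕ) + p.2 + 1)
    Set.univ (Set.Icc 1 (2 * k)) := by
  refine ⟨?_, ?_, ?_⟩
  · rintro ⟨i, j⟩ -
    simp only [Set.mem_Icc]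
    omega
  · rintro ⟨i, j⟩ - ⟨i', j'⟩ - h
    simp only at h
    ext <;> simp only <;> omega
  · rintro x ⟨hx₁, hx₂⟩
    refine ⟨(⟨(x - 1) / 2, by omega⟩, ⟨(x - 1) % 2, by omega⟩), Set.mem_univ _, ?_⟩
    simp only
    omega

theorem bijOn_add_fin_two (n : ℕ) :
    Set.BijOn (fun j : Fin 2 => n + j) Set.univ (Set.Icc n (n + 1)) := by
  refine ⟨fun j _ => ?_, fun j _ j' _ h => ?_, fun x ⟨hx₁, hx₂⟩ => ?_⟩
  · simp only [Set.mem_Icc]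
    omega
  · simp only at h
    omega
  · refine ⟨⟨x - n, by omega⟩, Set.mem_univ _, ?_⟩
    simp only
    omega

theorem exists_edge_interval_coloring [Finite E] [Finite V] (hε : IsRegularOn ε univ 2)
    (hβ : IsRegularOn β univ (2 * k)) :
    ∃ (col : D → ℕ) (low : E → ℕ), (∀ v, Set.BijOn col (β ⁻¹' {v}) (Set.Icc 1 (2 * k))) ∧
      ∀ e, Set.BijOn col (ε ⁻¹' {e}) (Set.Icc (low e) (low e + 1)) := by
  obtain ⟨o, c, hεo, hβo⟩ := exists_twoFactorization hε hβ
  refine ⟨fun d => 2 * c (ε d) + o d + 1, fun e => 2 * c e + 1, fun v => ?_, fun e => ?_⟩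
  · have h : Bijective fun d => (β d, c (ε d), o d) := (Equiv.prodAssoc V _ _).bijective.comp hβo
    exact (bijOn_two_mul_add k).comp (bijOn_preimage_singleton h v)
  · refine ((bijOn_add_fin_two _).comp (bijOn_preimage_singleton hεo e)).congr fun d hd => ?_
    simp [Set.mem_singleton_iff.1 hd, add_right_comm]

theorem card_sumElim_fiber {D' : Type*} [Fintype D'] {β' : D' → V} (v : V) :
    #{x | Sum.elim β β' x = v} = #{d | β d = v} + #{d | β' d = v} := by
  simp only [card_filter, Fintype.sum_sum_type, Sum.elim_inl, Sum.elim_inr]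
  rfl

theorem IsRegularOn.sumMap {D' E' : Type*} [Fintype D'] [DecidableEq E'] {ε' : D' → E'}
    (hε : IsRegularOn ε univ k) (hε' : IsRegularOn ε' univ k) :
    IsRegularOn (Sum.map ε ε') univ k := by
  simp only [IsRegularOn, card_filter] at hε hε' ⊢
  rintro (e | e) <;>
    simp only [Fintype.sum_sum_type, Sum.map_inl, Sum.map_inr, Sum.inl.injEq, Sum.inr.injEq,
      reduceCtorEq, if_false, sum_const_zero, add_zero, zero_add, hε, hε']

end Multigraphs

section Padding

universe u

theorem exists_isRegularOn_of_card_eq_mul {D : Type*} [Fintype D] {n k : ℕ}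
    (h : Fintype.card D = n * k) : ∃ f : D → Fin n, IsRegularOn f univ k := by
  let e : D ≃ Fin n × Fin k := Fintype.equivOfCardEq (by simp [h])
  refine ⟨fun d => (e d).1, ?_⟩
  simpa using IsRegularOn.of_bijective (f := fun d => (e d).1) (r := fun d => (e d).2) e.bijective

theorem card_filter_val_eq {A : Type*} [DecidableEq A] (P : A → Prop) [DecidablePred P]
    [Fintype {a // P a}] (a : A) : #{x : {a // P a} | x.1 = a} = if P a then 1 else 0 := by
  split_ifs with ha
  · exact card_eq_one.2 ⟨⟨a, ha⟩, by ext; simp [Subtype.ext_iff]⟩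
  · exact card_eq_zero.2 (filter_eq_empty_iff.2 fun x _ hx => ha (hx ▸ x.2))

-- `δ v` is the number of half-edges to be added at `v`.
theorem exists_padding {V : Type u} [Fintype V] [DecidableEq V] {δ : V → ℕ} (hδ : ∀ v, δ v ≤ 2)
    (heven : Even (∑ v, δ v)) :
    ∃ (D E : Type u) (_ : Fintype D) (_ : Fintype E) (_ : DecidableEq E) (ε : D → E) (β : D → V),
      IsRegularOn ε univ 2 ∧ (∀ v, #{d | β d = v} = δ v) ∧
      ∀ d d', β d = β d' → ε d = ε d' := by
  have hodd : Even (Fintype.card {v // Odd (δ v)}) := by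
    rwa [Fintype.card_subtype, ← even_sum_iff_even_card_odd]
  obtain ⟨n, hn⟩ := hodd
  obtain ⟨p, hp⟩ := exists_isRegularOn_of_card_eq_mul (hn.trans (mul_two n).symm)
  have hloop : IsRegularOn (Prod.fst : {v // δ v = 2} × Fin 2 → _) univ 2 := by
    have := IsRegularOn.of_bijective (D := {v // δ v = 2} × Fin 2) (r := Prod.snd) bijective_id
    rwa [Fintype.card_fin] at this
  refine ⟨{v // Odd (δ v)} ⊕ {v // δ v = 2} × Fin 2, Fin n ⊕ {v // δ v = 2}, inferInstance,
    inferInstance, inferInstance, Sum.map p Prod.fst, Sum.elim Subtype.val (fun l => l.1.1),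
    hp.sumMap hloop, fun v => ?_, ?_⟩
  · have hloops := hloop.card_filter_mem {w | w.1 = v}
    simp only [mem_filter, mem_univ, true_and] at hloops
    rw [card_sumElim_fiber, hloops, card_filter_val_eq, card_filter_val_eq]
    have := hδ v
    interval_cases δ v <;> decide
  · rintro (⟨v, hv⟩ | ⟨⟨v, hv⟩, i⟩) (⟨w, hw⟩ | ⟨⟨w, hw⟩, j⟩) h <;>
      simp only [Sum.elim_inl, Sum.elim_inr] at h <;> subst h
    · rfl
    · exact absurd (hw ▸ hv) (by decide)
    · exact absurd (hv ▸ hw) (by decide)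
    · rfl

end Padding

section NearlyRegular

/-- `c` colors the elements of `s` injectively by colors in `{1, …, t}`, and the set of colors used,
or its complement in `{1, …, t}`, is an interval. A cyclic interval `t`-coloring of a graph is an
edge coloring with this property on the set of edges at each vertex. -/
def IsCyclicIntervalOn {D : Type*} (t : ℕ) (c : D → ℕ) (s : Set D) : Prop :=
  Set.MapsTo c s (Set.Icc 1 t) ∧ Set.InjOn c s ∧
    (IsIntervalSet (c '' s) ∨ IsIntervalSet (Set.Icc 1 t \ c '' s))

theorem isIntervalSet_of_subset_Icc_succ {n : ℕ} {S : Set ℕ} (h : S ⊆ Set.Icc n (n + 1)) :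
    IsIntervalSet S := by
  have hpair : Set.Icc n (n + 1) = {n, n + 1} := by grind
  obtain rfl | rfl | rfl | rfl := Set.subset_pair_iff_eq.1 (hpair ▸ h)
  · exact ⟨1, 0, by simp⟩
  · exact ⟨n, n, (Set.Icc_self n).symm⟩
  · exact ⟨n + 1, n + 1, (Set.Icc_self _).symm⟩
  · exact ⟨n, n + 1, hpair.symm⟩

variable {D E V : Type*} [Fintype D] [DecidableEq E] [DecidableEq V] {ε : D → E} {β : D → V} {k : ℕ}

theorem even_sum_sub_card_fiber [Finite E] [Fintype V] (hε : IsRegularOn ε univ 2)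
    (hle : ∀ v, #{d | β d = v} ≤ 2 * k) : Even (∑ v, (2 * k - #{d | β d = v})) := by
  cases nonempty_fintype E
  have hsum : ∑ v, (2 * k - #{d | β d = v}) + Fintype.card E * 2 = Fintype.card V * (2 * k) := by
    rw [← hε.card_eq, card_eq_sum_card_fiberwise (f := β) (t := univ) (by simp),
      ← sum_add_distrib, sum_congr rfl fun v _ => Nat.sub_add_cancel (hle v)]
    simp
  grind

theorem bijOn_comp_inl {D D' E E' X : Type*} {ε : D → E} {ε' : D' → E'} {c : D ⊕ D' → X}
    {T : Set X} {e : E} (h : Set.BijOn c (Sum.map ε ε' ⁻¹' {.inl e}) T) :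
    Set.BijOn (c ∘ Sum.inl) (ε ⁻¹' {e}) T := by
  refine h.comp ⟨fun d hd => congrArg _ hd, Sum.inl_injective.injOn, ?_⟩
  rintro (d | d) hd
  · exact ⟨d, Sum.inl_injective hd, rfl⟩
  · exact absurd hd Sum.inr_ne_inl

theorem sdiff_image_inl_subset {D D' V X : Type*} {β : D → V} {β' : D' → V} {c : D ⊕ D' → X}
    {T : Set X} {v : V} (h : Set.SurjOn c (Sum.elim β β' ⁻¹' {v}) T) :
    T \ (c ∘ Sum.inl) '' (β ⁻¹' {v}) ⊆ (c ∘ Sum.inr) '' (β' ⁻¹' {v}) := by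
  rintro x ⟨hx, hnot⟩
  obtain ⟨d | d, hd, rfl⟩ := h hx
  · exact absurd ⟨d, hd, rfl⟩ hnot
  · exact ⟨d, hd, rfl⟩

theorem exists_isCyclicIntervalOn [Finite E] [Finite V] (hε : IsRegularOn ε univ 2)
    (hle : ∀ v, #{d | β d = v} ≤ 2 * k) (hge : ∀ v, 2 * k ≤ #{d | β d = v} + 2) :
    ∃ c : D → ℕ, (∀ v, IsCyclicIntervalOn (2 * k) c (β ⁻¹' {v})) ∧
      ∀ e, IsCyclicIntervalOn (2 * k) c (ε ⁻¹' {e}) := by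
  cases nonempty_fintype E
  cases nonempty_fintype V
  obtain ⟨D', E', _, _, _, ε', β', hε', hβ', hconst⟩ :=
    exists_padding (fun v => by have := hge v; omega) (even_sum_sub_card_fiber hε hle)
  have hreg : IsRegularOn (Sum.elim β β') univ (2 * k) := fun v => by
    rw [card_sumElim_fiber, hβ', Nat.add_sub_cancel' (hle v)]
  obtain ⟨c, low, hV, hE⟩ := exists_edge_interval_coloring (hε.sumMap hε') hreg
  have hmaps (d : D) : c (Sum.inl d) ∈ Set.Icc 1 (2 * k) := (hV (β d)).mapsTo rfl
  have hedge (e : E) := bijOn_comp_inl (hE (.inl e))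
  have hmissing (v : V) :
      IsIntervalSet (Set.Icc 1 (2 * k) \ (c ∘ Sum.inl) '' (β ⁻¹' {v})) := by
    obtain hempty | ⟨d₀, hd₀⟩ := (β' ⁻¹' {v}).eq_empty_or_nonempty
    · refine isIntervalSet_of_subset_Icc_succ (n := 0)
        (.trans (sdiff_image_inl_subset (hV v).surjOn) ?_)
      simp [hempty]
    · refine isIntervalSet_of_subset_Icc_succ (n := low (.inr (ε' d₀)))
        (.trans (sdiff_image_inl_subset (hV v).surjOn) ?_)
      rintro _ ⟨d, hd, rfl⟩
      exact (hE _).mapsTo (congrArg Sum.inr (hconst d d₀ (hd.trans hd₀.symm)))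
  exact ⟨c ∘ Sum.inl,
    fun v => ⟨fun d _ => hmaps d, (hV v).injOn.comp Sum.inl_injective.injOn fun _ => id,
      .inr (hmissing v)⟩,
    fun e => ⟨fun d _ => hmaps d, (hedge e).injOn, .inl ⟨_, _, (hedge e).image_eq⟩⟩⟩

end NearlyRegular

section Subdivision

variable {V : Type*} {H : SimpleGraph V} {t : ℕ}

theorem isCyclicIntervalColoring_iff {G : SimpleGraph V} {c : Sym2 V → ℕ} :
    IsCyclicIntervalColoring G t c ↔ ∀ v, IsCyclicIntervalOn t c (G.incidenceSet v) := by
  constructor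
  · rintro ⟨⟨hmaps, hproper⟩, hint⟩ v
    refine ⟨fun e he => hmaps e he.1, fun e he e' he' h => ?_, hint v⟩
    by_contra hne
    exact hproper e he.1 e' he'.1 hne ⟨v, he.2, he'.2⟩ h
  · refine fun h => ⟨⟨fun e he => ?_, fun e he e' he' hne ⟨v, hv, hv'⟩ hc => ?_⟩,
      fun v => (h v).2.2⟩
    · induction e with | h v w => exact (h v).1 ⟨he, Sym2.mem_mk_left v w⟩
    · exact hne ((h v).2.1 ⟨he, hv⟩ ⟨he', hv'⟩ hc)

/-- The edge of `H` traversed by a dart. -/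
def toEdgeSet (d : H.Dart) : H.edgeSet := ⟨d.edge, d.edge_mem⟩

/-- A dart of `H` starts at a vertex `v` along an edge `e`, and so stands for the edge `ve` of the
full subdivision. This is a bijection from darts of `H` to edges of the subdivision. -/
def subdivisionEdge (d : H.Dart) : Sym2 (V ⊕ H.edgeSet) := s(.inl d.fst, .inr (toEdgeSet d))

theorem subdivisionEdge_injective : Function.Injective (subdivisionEdge (H := H)) := by
  intro d d' h
  simp only [subdivisionEdge, toEdgeSet, Sym2.eq_iff, Sum.inl.injEq, Sum.inr.injEq,
    Subtype.mk.injEq, reduceCtorEq, and_false, or_false] at h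
  obtain ⟨hfst, hedge⟩ := h
  obtain rfl | rfl := (dart_edge_eq_iff d d').1 hedge
  · rfl
  · exact absurd hfst d'.snd_ne_fst

theorem exists_dart_of_mem {v : V} {e : H.edgeSet} (h : v ∈ (e : Sym2 V)) :
    ∃ d : H.Dart, d.fst = v ∧ toEdgeSet d = e := by
  obtain ⟨_, he⟩ := e
  obtain ⟨w, rfl⟩ := h
  exact ⟨⟨(v, w), he⟩, rfl, rfl⟩

theorem edgeSet_fullSubdivision :
    (fullSubdivision H).edgeSet = Set.range (subdivisionEdge (H := H)) := by
  have hdart {v : V} {e : H.edgeSet} (h : v ∈ (e : Sym2 V)) :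
      s(.inl v, .inr e) ∈ Set.range (subdivisionEdge (H := H)) := by
    obtain ⟨d, rfl, rfl⟩ := exists_dart_of_mem h
    exact ⟨d, rfl⟩
  ext x
  constructor
  · induction x with | h x y
    rintro (h : (fullSubdivision H).Adj x y)
    obtain ⟨-, ⟨v, e, hv, rfl, rfl⟩ | ⟨v, e, hv, rfl, rfl⟩⟩ := h
    · exact hdart hv
    · exact Sym2.eq_swap ▸ hdart hv
  · rintro ⟨d, rfl⟩
    exact ⟨Sum.inl_ne_inr, .inl ⟨d.fst, toEdgeSet d, Sym2.mem_mk_left _ _, rfl, rfl⟩⟩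

theorem inl_mem_subdivisionEdge {v : V} {d : H.Dart} :
    .inl v ∈ subdivisionEdge d ↔ d.fst = v := by
  simp [subdivisionEdge, eq_comm]

theorem inr_mem_subdivisionEdge {e : H.edgeSet} {d : H.Dart} :
    .inr e ∈ subdivisionEdge d ↔ toEdgeSet d = e := by
  simp [subdivisionEdge, eq_comm]

theorem incidenceSet_fullSubdivision (x : V ⊕ H.edgeSet) :
    (fullSubdivision H).incidenceSet x =
      subdivisionEdge '' {d : H.Dart | x ∈ subdivisionEdge d} := by
  rw [incidenceSet, edgeSet_fullSubdivision]
  exact (Set.image_preimage_eq_range_inter (f := subdivisionEdge) (t := {y | x ∈ y})).symm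

theorem IsCyclicIntervalOn.extend {D X : Type*} {f : D → X} (hf : Injective f) {c : D → ℕ}
    {s : Set D} (h : IsCyclicIntervalOn t c s) :
    IsCyclicIntervalOn t (Function.extend f c 0) (f '' s) := by
  obtain ⟨hmaps, hinj, hint⟩ := h
  have hcomp : Function.extend f c 0 ∘ f = c := funext (hf.extend_apply c 0)
  rw [← hcomp] at hmaps hinj hint
  exact ⟨Set.mapsTo_image_iff.2 hmaps, hinj.image_of_comp, by rwa [Set.image_comp] at hint⟩

theorem exists_isCyclicIntervalColoring_of_dart {c : H.Dart → ℕ}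
    (hV : ∀ v, IsCyclicIntervalOn t c {d | d.fst = v})
    (hE : ∀ e, IsCyclicIntervalOn t c {d | toEdgeSet d = e}) :
    ∃ c, IsCyclicIntervalColoring (fullSubdivision H) t c := by
  refine ⟨extend subdivisionEdge c 0, isCyclicIntervalColoring_iff.2 ?_⟩
  rintro (v | e) <;> rw [incidenceSet_fullSubdivision]
  · exact .extend subdivisionEdge_injective (by simpa only [inl_mem_subdivisionEdge] using hV v)
  · exact .extend subdivisionEdge_injective (by simpa only [inr_mem_subdivisionEdge] using hE e)

variable [Fintype V] [DecidableRel H.Adj]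

theorem degree_fullSubdivision (x : V ⊕ H.edgeSet)
    [DecidablePred (x ∈ subdivisionEdge (H := H) ·)] :
    (fullSubdivision H).degree x = #{d : H.Dart | x ∈ subdivisionEdge d} := by
  classical
  rw [← card_incidenceSet_eq_degree, ← Nat.card_eq_fintype_card, Nat.card_coe_set_eq,
    incidenceSet_fullSubdivision, Set.ncard_image_of_injective _ subdivisionEdge_injective,
    ← Set.ncard_coe_finset, coe_filter_univ]

theorem degree_fullSubdivision_inl (v : V) :
    (fullSubdivision H).degree (.inl v) = H.degree v := by
  classical
  simp only [degree_fullSubdivision, inl_mem_subdivisionEdge]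
  convert H.dart_fst_fiber_card_eq_degree v

theorem isRegularOn_toEdgeSet [DecidableEq V] :
    IsRegularOn (toEdgeSet (H := H)) univ 2 := fun e => by
  simpa [toEdgeSet, Subtype.ext_iff] using H.dart_edge_fiber_card e e.2

theorem degree_fullSubdivision_inr (e : H.edgeSet) :
    (fullSubdivision H).degree (.inr e) = 2 := by
  classical
  simp only [degree_fullSubdivision, inr_mem_subdivisionEdge]
  exact isRegularOn_toEdgeSet e

theorem two_le_maxDegree (h : H.maxDegree ≠ 1) (e : H.edgeSet) : 2 ≤ H.maxDegree := by
  obtain ⟨⟨v, w⟩, he⟩ := e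
  have hv : 0 < H.degree v := (H.degree_pos_iff_exists_adj v).2 ⟨w, he⟩
  have := H.degree_le_maxDegree v
  omega

theorem maxDegree_fullSubdivision (h : H.maxDegree ≠ 1) :
    (fullSubdivision H).maxDegree = H.maxDegree := by
  refine le_antisymm (maxDegree_le_of_forall_degree_le _ _ ?_)
    (maxDegree_le_of_forall_degree_le _ _ fun v => ?_)
  · rintro (v | e)
    · exact (degree_fullSubdivision_inl v).trans_le (H.degree_le_maxDegree v)
    · exact (degree_fullSubdivision_inr e).trans_le (two_le_maxDegree h e)
  · exact (degree_fullSubdivision_inl v).symm.trans_le (degree_le_maxDegree _ _)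

theorem exists_isCyclicIntervalColoring_fullSubdivision {k : ℕ} (hle : ∀ v, H.degree v ≤ 2 * k)
    (hge : ∀ v, 2 * k ≤ H.degree v + 2) :
    ∃ c, IsCyclicIntervalColoring (fullSubdivision H) (2 * k) c := by
  classical
  have hdeg (v : V) : #{d : H.Dart | d.fst = v} = H.degree v := H.dart_fst_fiber_card_eq_degree v
  obtain ⟨c, hV, hE⟩ := exists_isCyclicIntervalOn (ε := toEdgeSet (H := H)) (β := fun d => d.fst)
    isRegularOn_toEdgeSet (fun v => (hdeg v).trans_le (hle v)) (fun v => (hdeg v).symm ▸ hge v)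
  exact exists_isCyclicIntervalColoring_of_dart hV hE

end Subdivision

end

/-- if the maximum degree of `H` is even and differs from the minimum degree
by at most `2`, then the full subdivision `G` of `H` has a cyclic interval
`Δ(G)`-coloring. -/
theorem stmt_2 {V : Type*} [Fintype V] [DecidableEq V] (H : SimpleGraph V)
    [DecidableRel H.Adj] (hEven : Even H.maxDegree)
    (hdiff : H.maxDegree - H.minDegree ≤ 2) :
    ∃ c : Sym2 (V ⊕ H.edgeSet) → ℕ,
      IsCyclicIntervalColoring (fullSubdivision H) ((fullSubdivision H).maxDegree) c := by
  obtain ⟨k, hk⟩ := even_iff_exists_two_mul.1 hEven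
  rw [maxDegree_fullSubdivision (by omega), hk]
  refine exists_isCyclicIntervalColoring_fullSubdivision (fun v => ?_) fun v => ?_
  · exact hk ▸ H.degree_le_maxDegree v
  · have := H.minDegree_le_degree v
    omega
end

section
/- Let G be a finite bipartite graph with maximum degree Δ(G) = 2r−1 for some integer r ≥ 2, such that the degree of every vertex of G lies in the set {1, 2, 2r−2, 2r−1}. Then G has a cyclic interval t-coloring for some t ≤ 2r. -/
open SimpleGraph

/-!
Orient the edges so that at every vertex the in-degree and the out-degree differ by at most one;
both are then at most `r`. Kőnig's theorem, applied to the bipartite graph of tails and heads,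
splits the edges into `r` classes in each of which every vertex has at most one outgoing and one
incoming edge, and it can be arranged that at a vertex of even degree the same classes occur among
the outgoing and the incoming edges. So every class has maximum degree two, and a vertex of even
degree has degree zero or two in it, as in Petersen's 2-factor theorem. The graph being bipartite,
the edges of class `i` can be colored properly with `2i + 1` and `2i + 2`. At a vertex of degree
`2` the colors then form a pair `{2i + 1, 2i + 2}`, and at a vertex of degree `2r - 2` such a pair
is missing; degrees `1` and `2r - 1` need no argument.
-/

section Fibers

open Finset Function

variable {E A B C V : Type*}

/-- `c` takes distinct values at distinct elements of each fibre of `f`. A bipartite multigraph is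
encoded here by its edge type `E` and the two maps `a : E → A`, `b : E → B` sending an edge to its
ends, so that an edge coloring `c` is proper when it is injective on the fibres of `a` and of
`b`. -/
def InjOnFibers (f : E → A) (c : E → C) : Prop :=
  ∀ ⦃e e' : E⦄, f e = f e' → c e = c e' → e = e'

namespace InjOnFibers

lemma injOn {f : E → A} {c : E → C} (hc : InjOnFibers f c) (x : A) :
    Set.InjOn c {e | f e = x} :=
  fun _ he _ he' h ↦ hc (he.trans he'.symm) h

lemma card_fiber_le_one [Fintype E] [DecidableEq A] [DecidableEq C] {f : E → A} {c : E → C}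
    (hc : InjOnFibers f c) (p : A × C) : #{e | (f e, c e) = p} ≤ 1 := by
  refine card_le_one.2 fun e he e' he' ↦ ?_
  obtain ⟨hf, hce⟩ := Prod.ext_iff.1 (((mem_filter_univ _).1 he).trans
    ((mem_filter_univ _).1 he').symm)
  exact hc hf hce

lemma exists_eq_of_card_fiber_eq [Fintype E] [Fintype C] [DecidableEq A] {f : E → A} {c : E → C}
    (hc : InjOnFibers f c) {x : A} (hx : #{e | f e = x} = Fintype.card C) (i : C) :
    ∃ e, f e = x ∧ c e = i := by
  classical
  have himage : image c {e | f e = x} = univ := by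
    refine eq_univ_of_card _ ((card_image_of_injOn ?_).trans hx)
    simpa using hc.injOn x
  have hi : i ∈ image c {e | f e = x} := himage ▸ mem_univ i
  simpa using hi

lemma card_fiber_eq_one [Fintype E] [Fintype C] [DecidableEq A] [DecidableEq C] {f : E → A}
    {c : E → C} (hc : InjOnFibers f c) {x : A} (hx : #{e | f e = x} = Fintype.card C) (i : C) :
    #{e | (f e, c e) = (x, i)} = 1 := by
  obtain ⟨e, rfl, rfl⟩ := hc.exists_eq_of_card_fiber_eq hx i
  exact (hc.card_fiber_le_one _).antisymm (card_pos.2 ⟨e, by simp⟩)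

lemma extend_last_of_matching {f : E → A} {m : B → E} (hm : Injective (f ∘ m)) {k : ℕ}
    {c : {e // e ∉ Set.range m} → Fin k} (hc : InjOnFibers (fun e ↦ f e.1) c)
    [DecidablePred (· ∈ Set.range m)] :
    InjOnFibers f fun e ↦
      if he : e ∈ Set.range m then Fin.last k else (c ⟨e, he⟩).castSucc := by
  intro e e' hf hcol
  by_cases he : e ∈ Set.range m <;> by_cases he' : e' ∈ Set.range m
  · obtain ⟨x, rfl⟩ := he
    obtain ⟨y, rfl⟩ := he'
    exact congrArg m (hm hf)
  · simp [he, he', (Fin.castSucc_ne_last _).symm] at hcol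
  · simp [he, he'] at hcol
  · simp only [he, he', dite_false, Fin.castSucc_inj] at hcol
    exact congrArg Subtype.val (@hc ⟨e, he⟩ ⟨e', he'⟩ hf hcol)

end InjOnFibers

variable [Fintype E] [DecidableEq A] [DecidableEq B]

section Regular

variable {f : E → A} {g : E → B} {k : ℕ}

lemma card_filter_mem_of_regular (hf : ∀ x, #{e | f e = x} = k) (s : Finset A) :
    #{e | f e ∈ s} = #s * k := by
  simp [← sum_card_fiberwise_eq_card_filter, hf]

/-- In a regular bipartite multigraph, a set `s` of vertices meets `k * #s` edges, all of which end
at neighbors of `s`; this is Hall's condition. -/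
lemma exists_perfect_matching [Finite A] [Finite B] (hk : 0 < k) (hf : ∀ x, #{e | f e = x} = k)
    (hg : ∀ y, #{e | g e = y} = k) :
    ∃ m : A → E, (∀ x, f (m x) = x) ∧ Bijective (g ∘ m) := by
  cases nonempty_fintype A
  cases nonempty_fintype B
  have hall (s : Finset A) : #s ≤ #(s.biUnion fun x ↦ image g {e | f e = x}) := by
    set N := s.biUnion fun x ↦ image g {e | f e = x}
    have hsN : #s * k ≤ #N * k := calc
      #s * k = #{e | f e ∈ s} := (card_filter_mem_of_regular hf s).symm
      _ ≤ #{e | g e ∈ N} := card_le_card fun e he ↦ by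
        simp only [mem_filter_univ] at he ⊢
        exact mem_biUnion.2 ⟨f e, he, mem_image_of_mem g (by simp)⟩
      _ = #N * k := card_filter_mem_of_regular hg N
    exact Nat.le_of_mul_le_mul_right hsN hk
  obtain ⟨h, h_inj, h_mem⟩ := (all_card_le_biUnion_card_iff_exists_injective _).1 hall
  have h_edge (x : A) : ∃ e, f e = x ∧ g e = h x := by simpa using h_mem x
  choose m hfm hgm using h_edge
  have hAB : Fintype.card A * k = Fintype.card B * k := calc
    Fintype.card A * k = #{e | f e ∈ univ} := (card_filter_mem_of_regular hf univ).symm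
    _ = #{e | g e ∈ univ} := by simp only [mem_univ]
    _ = Fintype.card B * k := card_filter_mem_of_regular hg univ
  have h_bij : Bijective h := (Fintype.bijective_iff_injective_and_card h).2
    ⟨h_inj, Nat.eq_of_mul_eq_mul_right hk hAB⟩
  exact ⟨m, hfm, (funext hgm : g ∘ m = h) ▸ h_bij⟩

lemma card_fiber_compl_range_add_one {m : C → E} (hm : Bijective (g ∘ m))
    [Fintype {e // e ∉ Set.range m}] (y : B) :
    #{e : {e // e ∉ Set.range m} | g e = y} + 1 = #{e | g e = y} := by
  classical
  obtain ⟨x, rfl⟩ := hm.surjective y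
  have hmap : map (Embedding.subtype _) {e : {e // e ∉ Set.range m} | g e = (g ∘ m) x} =
      ({e | g e = (g ∘ m) x} : Finset E).erase (m x) := by
    ext e
    simp only [mem_map, mem_erase, mem_filter_univ]
    constructor
    · rintro ⟨⟨e, he⟩, hge, rfl⟩
      exact ⟨fun h ↦ he ⟨x, h.symm⟩, hge⟩
    · rintro ⟨hne, hge⟩
      have he : e ∉ Set.range m := by
        rintro ⟨x', rfl⟩
        exact hne (congrArg m (hm.injective hge))
      exact ⟨⟨e, he⟩, hge, rfl⟩
  rw [← card_map (Embedding.subtype _), hmap, card_erase_add_one (by simp)]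

theorem exists_properColoring_of_regular [Finite A] [Finite B] (hf : ∀ x, #{e | f e = x} = k)
    (hg : ∀ y, #{e | g e = y} = k) :
    ∃ c : E → Fin k, InjOnFibers f c ∧ InjOnFibers g c := by
  classical
  induction k generalizing E with
  | zero =>
    have : IsEmpty E :=
      ⟨fun e ↦ filter_eq_empty_iff.1 (card_eq_zero.1 (hf (f e))) (mem_univ e) rfl⟩
    exact ⟨isEmptyElim, fun e ↦ isEmptyElim e, fun e ↦ isEmptyElim e⟩
  | succ k ih =>
    obtain ⟨m, hfm, hgm⟩ := exists_perfect_matching k.succ_pos hf hg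
    have hfm : Bijective (f ∘ m) := (funext hfm : f ∘ m = id) ▸ bijective_id
    obtain ⟨c, hcf, hcg⟩ := ih (E := {e // e ∉ Set.range m})
      (fun x ↦ Nat.add_right_cancel ((card_fiber_compl_range_add_one hfm x).trans (hf x)))
      (fun y ↦ Nat.add_right_cancel ((card_fiber_compl_range_add_one hgm y).trans (hg y)))
    exact ⟨_, InjOnFibers.extend_last_of_matching hfm.injective hcf,
      InjOnFibers.extend_last_of_matching hgm.injective hcg⟩

end Regular

section Koenig

universe v

variable [DecidableEq V] {t h : E → V} {k : ℕ}

lemma card_filter_sumType {P : Type*} [Fintype P] (p : E ⊕ P → Prop) [DecidablePred p] :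
    #{q | p q} = #{e | p (.inl e)} + #{q | p (.inr q)} := by
  simp only [card_filter, Fintype.sum_sum_type]

lemma card_fiber_sumElim {P : Type*} [Fintype P] (t : E → V) (t' : P → V) (v : V) :
    #{q | Sum.elim t t' q = v} = #{e | t e = v} + #{p | t' p = v} :=
  card_filter_sumType _

lemma card_fiber_sigma_fst [Fintype V] (n : V → ℕ) (v : V) :
    #{p : Σ v, Fin (n v) | p.1 = v} = n v :=
  (Fintype.card_subtype _).symm.trans
    ((Fintype.card_congr (Equiv.sigmaSubtype v)).trans (Fintype.card_fin _))

lemma sum_card_fiber [Fintype V] (t : E → V) : ∑ v, #{e | t e = v} = Fintype.card E := by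
  simpa using sum_card_fiberwise_eq_card_filter univ univ t

lemma exists_digraph_of_sum_eq {V : Type v} [DecidableEq V] [Fintype V] {m n : V → ℕ}
    (hmn : ∑ v, m v = ∑ v, n v) :
    ∃ (Q : Type v) (_ : Fintype Q) (t h : Q → V),
      (∀ v, #{q | t q = v} = m v) ∧ ∀ v, #{q | h q = v} = n v := by
  let σ : (Σ v, Fin (m v)) ≃ Σ v, Fin (n v) := Fintype.equivOfCardEq (by simpa using hmn)
  refine ⟨Σ v, Fin (m v), inferInstance, Sigma.fst, fun q ↦ (σ q).1, card_fiber_sigma_fst m,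
    fun v ↦ ?_⟩
  rw [← card_fiber_sigma_fst n v]
  exact card_equiv σ (by simp)

/-- At a vertex whose larger semidegree is `d`, add `k - d` loops; what then remains missing from
the outdegrees and from the indegrees has the same sum, so it can be matched up arbitrarily. -/
lemma exists_regular_padding {V : Type v} [DecidableEq V] [Finite V] {t h : E → V}
    (ht : ∀ v, #{e | t e = v} ≤ k) (hh : ∀ v, #{e | h e = v} ≤ k) :
    ∃ (P : Type v) (_ : Fintype P) (t' h' : P → V),
      (∀ v, #{e | t e = v} + #{p | t' p = v} = k) ∧
      (∀ v, #{e | h e = v} + #{p | h' p = v} = k) ∧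
      ∀ v, #{e | t e = v} = #{e | h e = v} → ∀ p, t' p = v ↔ h' p = v := by
  cases nonempty_fintype V
  let out v := #{e | t e = v}
  let inn v := #{e | h e = v}
  have hsum : ∑ v, (inn v - out v) = ∑ v, (out v - inn v) := by
    have h_add : ∑ v, (inn v - out v) + ∑ v, out v = ∑ v, (out v - inn v) + ∑ v, inn v := by
      simp only [← sum_add_distrib, Nat.sub_add_eq_max, max_comm]
    rw [sum_card_fiber, sum_card_fiber] at h_add
    exact Nat.add_right_cancel h_add
  obtain ⟨Q, _, t', h', ht', hh'⟩ := exists_digraph_of_sum_eq hsum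
  refine ⟨(Σ v, Fin (k - max (out v) (inn v))) ⊕ Q, inferInstance, Sum.elim Sigma.fst t',
    Sum.elim Sigma.fst h', fun v ↦ ?_, fun v ↦ ?_, ?_⟩
  · have h_out : out v ≤ k := ht v
    have h_inn : inn v ≤ k := hh v
    rw [card_fiber_sumElim, card_fiber_sigma_fst, ht']
    change out v + _ = k
    omega
  · have h_out : out v ≤ k := ht v
    have h_inn : inn v ≤ k := hh v
    rw [card_fiber_sumElim, card_fiber_sigma_fst, hh']
    change inn v + _ = k
    omega
  · rintro v hv (p | q)
    · rfl
    · have ht0 := card_eq_zero.1 ((ht' v).trans (Nat.sub_eq_zero_of_le hv.ge))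
      have hh0 := card_eq_zero.1 ((hh' v).trans (Nat.sub_eq_zero_of_le hv.le))
      exact iff_of_false (filter_eq_empty_iff.1 ht0 (mem_univ q))
        (filter_eq_empty_iff.1 hh0 (mem_univ q))

/-- Kőnig's theorem applied to the bipartite graph of tails and heads; on a regular padding, every
vertex meets every color once as a tail and once as a head, and at balanced vertices the padding
consists of loops. -/
theorem exists_properColoring_of_digraph [Finite V] (ht : ∀ v, #{e | t e = v} ≤ k)
    (hh : ∀ v, #{e | h e = v} ≤ k) :
    ∃ c : E → Fin k, InjOnFibers t c ∧ InjOnFibers h c ∧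
      ∀ v, #{e | t e = v} = #{e | h e = v} →
        ∀ i, #{e | (t e, c e) = (v, i)} = #{e | (h e, c e) = (v, i)} := by
  obtain ⟨P, _, t', h', ht', hh', hloop⟩ := exists_regular_padding ht hh
  have htP (v : V) : #{q | Sum.elim t t' q = v} = k := (card_fiber_sumElim t t' v).trans (ht' v)
  have hhP (v : V) : #{q | Sum.elim h h' q = v} = k := (card_fiber_sumElim h h' v).trans (hh' v)
  obtain ⟨c, hct, hch⟩ := exists_properColoring_of_regular htP hhP
  refine ⟨c ∘ Sum.inl, fun e e' hte hce ↦ Sum.inl_injective (hct hte hce),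
    fun e e' hhe hce ↦ Sum.inl_injective (hch hhe hce), fun v hv i ↦ ?_⟩
  have h_split (s : E → V) (s' : P → V) : #{q | (Sum.elim s s' q, c q) = (v, i)} =
      #{e | (s e, c (Sum.inl e)) = (v, i)} + #{p | (s' p, c (Sum.inr p)) = (v, i)} :=
    card_filter_sumType _
  have h_pad : #{p | (t' p, c (Sum.inr p)) = (v, i)} = #{p | (h' p, c (Sum.inr p)) = (v, i)} := by
    simp only [Prod.mk.injEq, hloop v hv]
  have htc := hct.card_fiber_eq_one ((htP v).trans (Fintype.card_fin k).symm) i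
  have hhc := hch.card_fiber_eq_one ((hhP v).trans (Fintype.card_fin k).symm) i
  simp only [comp_apply]
  rw [h_split] at htc hhc
  omega

theorem exists_properColoring_of_card_fiber_le [Finite A] [Finite B] {a : E → A} {b : E → B}
    (ha : ∀ x, #{e | a e = x} ≤ k) (hb : ∀ y, #{e | b e = y} ≤ k) :
    ∃ c : E → Fin k, InjOnFibers a c ∧ InjOnFibers b c := by
  obtain ⟨c, hca, hcb, -⟩ := exists_properColoring_of_digraph
    (t := fun e ↦ (Sum.inl (a e) : A ⊕ B)) (h := fun e ↦ Sum.inr (b e)) (k := k)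
    (by rintro (x | y) <;> simp [ha]) (by rintro (x | y) <;> simp [hb])
  exact ⟨c, fun e e' he ↦ hca (congrArg Sum.inl he), fun e e' he ↦ hcb (congrArg Sum.inr he)⟩

end Koenig


section Equitable

variable {f : E → A} {k : ℕ}

lemma exists_numbering (f : E → A) :
    ∃ n : E → ℕ, InjOnFibers f n ∧ ∀ e, n e < #{e' | f e' = f e} := by
  let σ (x : A) : {e // f e = x} ≃ Fin #{e | f e = x} :=
    Fintype.equivFinOfCardEq (Fintype.card_subtype _)
  have hσ : InjOnFibers f fun e ↦ (σ (f e) ⟨e, rfl⟩ : ℕ) := by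
    have h_inj : ∀ {x y : A}, x = y → ∀ (e : {e // f e = x}) (e' : {e // f e = y}),
        (σ x e : ℕ) = σ y e' → e.1 = e'.1 := by
      rintro x _ rfl e e' h
      exact congrArg Subtype.val ((σ x).injective (Fin.ext h))
    exact fun e e' hf h ↦ h_inj hf ⟨e, rfl⟩ ⟨e', rfl⟩ h
  exact ⟨_, hσ, fun e ↦ (σ (f e) ⟨e, rfl⟩).isLt⟩

lemma exists_vertex_splitting (f : E → A) (hk : 0 < k) :
    ∃ p : E → Fin (Fintype.card E), (∀ e, (p e : ℕ) < #{e' | f e' = f e} ⌈/⌉ k) ∧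
      ∀ q, #{e | (f e, p e) = q} ≤ k := by
  obtain ⟨n, hn_inj, hn_lt⟩ := exists_numbering f
  have hn_card (e : E) : n e / k < Fintype.card E :=
    (Nat.div_le_self _ _).trans_lt ((hn_lt e).trans_le (card_le_univ _))
  refine ⟨fun e ↦ ⟨n e / k, hn_card e⟩, fun e ↦ ?_, fun q ↦ ?_⟩
  · exact lt_of_not_ge fun h ↦ ((ceilDiv_le_iff_le_mul hk).1 h).not_gt
      ((Nat.mul_div_le _ _).trans_lt (hn_lt e))
  · refine (card_le_card_of_injOn (t := range k) (fun e ↦ n e % k)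
      (fun e _ ↦ mem_range.2 (Nat.mod_lt _ hk)) ?_).trans_eq (card_range k)
    intro e he e' he' (h_mod : n e % k = n e' % k)
    obtain ⟨hf, hp⟩ := Prod.ext_iff.1 (((mem_filter_univ _).1 he).trans
      ((mem_filter_univ _).1 he').symm)
    have h_div : n e / k = n e' / k := Fin.mk.inj hp
    exact hn_inj hf (by rw [← Nat.div_add_mod (n e) k, h_div, h_mod, Nat.div_add_mod])

lemma card_colorClass_le_of_splitting {c : E → C} [DecidableEq C] {p : E → Fin (Fintype.card E)}
    (hp : ∀ e, (p e : ℕ) < #{e' | f e' = f e} ⌈/⌉ k) (hc : InjOnFibers (fun e ↦ (f e, p e)) c)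
    (x : A) (i : C) : #{e | f e = x ∧ c e = i} ≤ #{e | f e = x} ⌈/⌉ k := by
  rw [← card_range (_ ⌈/⌉ k)]
  refine card_le_card_of_injOn (fun e ↦ (p e : ℕ)) (fun e he ↦ ?_) fun e he e' he' h ↦ ?_
  · obtain ⟨rfl, -⟩ := (mem_filter_univ _).1 he
    exact mem_range.2 (hp e)
  · obtain ⟨hfe, hce⟩ := (mem_filter_univ _).1 he
    obtain ⟨hfe', hce'⟩ := (mem_filter_univ _).1 he'
    exact hc (Prod.ext (hfe.trans hfe'.symm) (Fin.ext h)) (hce.trans hce'.symm)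

/-- Split every vertex into vertices of degree at most `k` and color the result properly. -/
theorem exists_equitableColoring [Finite A] [Finite B] (a : E → A) (b : E → B) (hk : 0 < k) :
    ∃ c : E → Fin k, (∀ x i, #{e | a e = x ∧ c e = i} ≤ #{e | a e = x} ⌈/⌉ k) ∧
      ∀ y i, #{e | b e = y ∧ c e = i} ≤ #{e | b e = y} ⌈/⌉ k := by
  obtain ⟨p, hp, hap⟩ := exists_vertex_splitting a hk
  obtain ⟨q, hq, hbq⟩ := exists_vertex_splitting b hk
  obtain ⟨c, hca, hcb⟩ := exists_properColoring_of_card_fiber_le hap hbq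
  exact ⟨c, card_colorClass_le_of_splitting hp hca, card_colorClass_le_of_splitting hq hcb⟩

end Equitable

section Orientation

lemma card_filter_balanced_of_equitable {f : E → A} {c : E → Fin 2} {x : A}
    (hc : ∀ i, #{e | f e = x ∧ c e = i} ≤ #{e | f e = x} ⌈/⌉ 2) :
    #{e | f e = x ∧ c e = 0} ≤ #{e | f e = x ∧ c e ≠ 0} + 1 ∧
      #{e | f e = x ∧ c e ≠ 0} ≤ #{e | f e = x ∧ c e = 0} + 1 := by
  have h_sum := card_filter_add_card_filter_not (s := {e | f e = x}) (fun e ↦ c e = 0)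
  have h_zero := hc 0
  have h_one := hc 1
  have h_ne (e : E) : c e = 1 ↔ c e ≠ 0 := by omega
  simp only [filter_filter, Nat.ceilDiv_eq_add_pred_div, h_ne, ne_eq] at h_sum h_zero h_one ⊢
  omega

theorem exists_balanced_orientation_s4 [Finite A] [Finite B] (a : E → A) (b : E → B) :
    ∃ t h : E → A ⊕ B, (∀ e, s(t e, h e) = s(.inl (a e), .inr (b e))) ∧
      ∀ v, #{e | t e = v} ≤ #{e | h e = v} + 1 ∧ #{e | h e = v} ≤ #{e | t e = v} + 1 := by
  obtain ⟨c, hca, hcb⟩ := exists_equitableColoring a b two_pos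
  refine ⟨fun e ↦ if c e = 0 then .inl (a e) else .inr (b e),
    fun e ↦ if c e = 0 then .inr (b e) else .inl (a e), fun e ↦ ?_, ?_⟩
  · by_cases he : c e = 0 <;> simp [he, Sym2.eq_swap]
  · rintro (x | y)
    · simpa [ite_eq_iff, and_comm] using card_filter_balanced_of_equitable (hca x)
    · simpa [ite_eq_iff, and_comm] using (card_filter_balanced_of_equitable (hcb y)).symm

end Orientation

section TwoDecomposition

variable [DecidableEq C] [DecidableEq V] {f : E → A} {t h : E → V} {k : ℕ}

/-- The classes of `κ` decompose the edges into subgraphs of maximum degree at most two in which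
every vertex of even degree has degree zero or two, as in Petersen's 2-factor theorem. As for
`InjOnFibers`, this is the condition at the ends `f e` of the edges `e`. -/
structure IsTwoDecomposition (f : E → A) (κ : E → C) : Prop where
  card_le_two : ∀ p, #{e | (f e, κ e) = p} ≤ 2
  even_card : ∀ x, Even #{e | f e = x} → ∀ i, Even #{e | (f e, κ e) = (x, i)}

lemma card_fiber_eq_add {ι : A → V} (hth : ∀ e, t e ≠ h e)
    (hf : ∀ e x, f e = x ↔ t e = ι x ∨ h e = ι x) (x : A) :
    #{e | f e = x} = #{e | t e = ι x} + #{e | h e = ι x} := by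
  classical
  simp only [hf, filter_or]
  exact card_union_of_disjoint (disjoint_filter.2 fun e _ ht hh ↦ hth e (ht.trans hh.symm))

lemma isTwoDecomposition_of_orientation {ι : A → V} {κ : E → C} (hth : ∀ e, t e ≠ h e)
    (hf : ∀ e x, f e = x ↔ t e = ι x ∨ h e = ι x) (ht : InjOnFibers t κ) (hh : InjOnFibers h κ)
    (h_balanced : ∀ v, #{e | t e = v} ≤ #{e | h e = v} + 1 ∧ #{e | h e = v} ≤ #{e | t e = v} + 1)
    (h_eq : ∀ v, #{e | t e = v} = #{e | h e = v} →
      ∀ i, #{e | (t e, κ e) = (v, i)} = #{e | (h e, κ e) = (v, i)}) :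
    IsTwoDecomposition f κ := by
  have h_class (x : A) (i : C) : #{e | (f e, κ e) = (x, i)} =
      #{e | (t e, κ e) = (ι x, i)} + #{e | (h e, κ e) = (ι x, i)} :=
    card_fiber_eq_add (ι := Prod.map ι id) (fun e he ↦ hth e (congrArg Prod.fst he))
      (fun e p ↦ by simp [Prod.ext_iff, hf, or_and_right]) (x, i)
  refine ⟨fun (x, i) ↦ ?_, fun x hx i ↦ ?_⟩
  · rw [h_class]
    exact add_le_add (ht.card_fiber_le_one _) (hh.card_fiber_le_one _)
  · have h_degrees : #{e | t e = ι x} = #{e | h e = ι x} := by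
      rw [card_fiber_eq_add hth hf] at hx
      have := h_balanced (ι x)
      grind
    rw [h_class, h_eq _ h_degrees]
    exact ⟨_, rfl⟩

theorem exists_isTwoDecomposition [Finite A] [Finite B] {a : E → A} {b : E → B}
    (ha : ∀ x, #{e | a e = x} ≤ 2 * k) (hb : ∀ y, #{e | b e = y} ≤ 2 * k) :
    ∃ κ : E → Fin k, IsTwoDecomposition a κ ∧ IsTwoDecomposition b κ := by
  obtain ⟨t, h, h_ends, h_balanced⟩ := exists_balanced_orientation_s4 a b
  have hth (e : E) : t e ≠ h e := by
    have := h_ends e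
    grind
  have ha_ends (e : E) (x : A) : a e = x ↔ t e = .inl x ∨ h e = .inl x := by
    have := h_ends e
    grind
  have hb_ends (e : E) (y : B) : b e = y ↔ t e = .inr y ∨ h e = .inr y := by
    have := h_ends e
    grind
  have h_le (v : A ⊕ B) : #{e | t e = v} ≤ k ∧ #{e | h e = v} ≤ k := by
    have h_deg : #{e | t e = v} + #{e | h e = v} ≤ 2 * k := by
      rcases v with x | y
      · exact (card_fiber_eq_add hth ha_ends x).symm.trans_le (ha x)
      · exact (card_fiber_eq_add hth hb_ends y).symm.trans_le (hb y)
    have := h_balanced v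
    omega
  obtain ⟨κ, hκt, hκh, hκ⟩ := exists_properColoring_of_digraph (fun v ↦ (h_le v).1)
    fun v ↦ (h_le v).2
  exact ⟨κ, isTwoDecomposition_of_orientation hth ha_ends hκt hκh h_balanced hκ,
    isTwoDecomposition_of_orientation hth hb_ends hκt hκh h_balanced hκ⟩

end TwoDecomposition

section PairedColoring

variable {f : E → A} {k : ℕ}

/-- A proper edge coloring with colors `1, …, 2k`, grouped into the pairs `{2i + 1, 2i + 2}`, such
that a vertex of even degree misses both colors of a pair or neither. As for `InjOnFibers`, this is
the condition at the ends `f e` of the edges `e`. -/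
structure IsPairedColoring (k : ℕ) (f : E → A) (c : E → ℕ) : Prop where
  mem_Icc : ∀ e, c e ∈ Icc 1 (2 * k)
  injOnFibers : InjOnFibers f c
  paired : ∀ x, Even #{e | f e = x} →
    ∀ i, (∃ e, f e = x ∧ c e = 2 * i + 1) ↔ ∃ e, f e = x ∧ c e = 2 * i + 2

lemma IsTwoDecomposition.isPairedColoring {κ : E → Fin k} {δ : E → Fin 2}
    (hκ : IsTwoDecomposition f κ) (hδ : InjOnFibers (fun e ↦ (f e, κ e)) δ) :
    IsPairedColoring k f fun e ↦ 2 * κ e + δ e + 1 where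
  mem_Icc e := by
    rw [mem_Icc]
    omega
  injOnFibers e e' hf hc := hδ (Prod.ext hf (by grind)) (by grind)
  paired x hx := by
    have h_both (e : E) (he : f e = x) (j : Fin 2) : ∃ e', f e' = x ∧ κ e' = κ e ∧ δ e' = j := by
      have h_pos : 0 < #{e' | (f e', κ e') = (x, κ e)} := card_pos.2 ⟨e, by simp [he]⟩
      have h_two : #{e' | (f e', κ e') = (x, κ e)} = Fintype.card (Fin 2) := by
        have := hκ.card_le_two (x, κ e)
        have := hκ.even_card x hx (κ e)
        rw [Fintype.card_fin]
        grind
      obtain ⟨e', he', hj⟩ := hδ.exists_eq_of_card_fiber_eq h_two j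
      exact ⟨e', congrArg Prod.fst he', congrArg Prod.snd he', hj⟩
    refine fun i ↦ ⟨fun ⟨e, he, hc⟩ ↦ ?_, fun ⟨e, he, hc⟩ ↦ ?_⟩
    · obtain ⟨e', he', hκ', hδ'⟩ := h_both e he 1
      exact ⟨e', he', by grind⟩
    · obtain ⟨e', he', hκ', hδ'⟩ := h_both e he 0
      exact ⟨e', he', by grind⟩

theorem exists_isPairedColoring [Finite A] [Finite B] {a : E → A} {b : E → B}
    (ha : ∀ x, #{e | a e = x} ≤ 2 * k) (hb : ∀ y, #{e | b e = y} ≤ 2 * k) :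
    ∃ c : E → ℕ, IsPairedColoring k a c ∧ IsPairedColoring k b c := by
  obtain ⟨κ, hκa, hκb⟩ := exists_isTwoDecomposition ha hb
  obtain ⟨δ, hδa, hδb⟩ := exists_properColoring_of_card_fiber_le hκa.card_le_two hκb.card_le_two
  exact ⟨_, hκa.isPairedColoring hδa, hκb.isPairedColoring hδb⟩

/-- Two elements of `T` form a pair; a single element is an interval anyway. -/
lemma isIntervalSet_of_card_le_two {T : Finset ℕ} (h0 : 0 ∉ T) (hT : #T ≤ 2)
    (h_pair : Even #T → ∀ i, 2 * i + 1 ∈ T ↔ 2 * i + 2 ∈ T) : IsIntervalSet (T : Set ℕ) := by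
  rcases T.eq_empty_or_nonempty with rfl | hne
  · exact ⟨1, 0, by simp⟩
  rcases Nat.lt_or_ge #T 2 with h | h
  · obtain ⟨x, rfl⟩ := card_eq_one.1 (show #T = 1 by grind)
    exact ⟨x, x, by simp⟩
  have h_two : #T = 2 := hT.antisymm h
  have h_pair := h_pair (h_two ▸ even_two)
  obtain ⟨i, hi⟩ : ∃ i, 2 * i + 1 ∈ T := by
    obtain ⟨x, hx⟩ := hne
    rcases Nat.even_or_odd' x with ⟨i, rfl | rfl⟩
    · cases i with
      | zero => exact absurd hx h0
      | succ i => exact ⟨i, (h_pair i).2 hx⟩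
    · exact ⟨i, hx⟩
  have hT_eq : {2 * i + 1, 2 * i + 2} = T := by
    refine eq_of_subset_of_card_le ?_ (by simp [h_two])
    simp [insert_subset_iff, hi, (h_pair i).1 hi]
  refine ⟨2 * i + 1, 2 * i + 2, ?_⟩
  ext j
  simp only [← hT_eq, coe_pair, Set.mem_insert_iff, Set.mem_singleton_iff, Set.mem_Icc]
  omega

lemma IsPairedColoring.isIntervalSet_or {c : E → ℕ} (hc : IsPairedColoring k f c) {x : A}
    (hx : #{e | f e = x} ≤ 2 ∨ 2 * k ≤ #{e | f e = x} + 2) :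
    IsIntervalSet (c '' {e | f e = x}) ∨
      IsIntervalSet (Set.Icc 1 (2 * k) \ c '' {e | f e = x}) := by
  set S := image c {e | f e = x}
  have hS : c '' {e | f e = x} = S := by simp [S]
  have hS_mem (j : ℕ) : j ∈ S ↔ ∃ e, f e = x ∧ c e = j := by simp [S]
  have hS_card : #S = #{e | f e = x} := card_image_of_injOn (by simpa using hc.injOnFibers.injOn x)
  have hS_sub : S ⊆ Icc 1 (2 * k) := image_subset_iff.2 fun e _ ↦ hc.mem_Icc e
  have h_compl : #(Icc 1 (2 * k) \ S) = 2 * k - #S := by simp [card_sdiff_of_subset hS_sub]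
  have h_le : #S ≤ 2 * k := by simpa using card_le_card hS_sub
  have h_pair (hS_even : Even #S) (i : ℕ) : 2 * i + 1 ∈ S ↔ 2 * i + 2 ∈ S := by
    simpa only [hS_mem] using hc.paired x (hS_card ▸ hS_even) i
  rw [hS, ← coe_Icc, ← coe_sdiff]
  rw [← hS_card] at hx
  refine hx.imp (fun h ↦ ?_) fun h ↦ ?_
  · exact isIntervalSet_of_card_le_two (fun h0 ↦ by simpa using hS_sub h0) h h_pair
  · refine isIntervalSet_of_card_le_two (by simp) (by omega) fun h_even i ↦ ?_
    have h_Icc : 2 * i + 1 ∈ Icc 1 (2 * k) ↔ 2 * i + 2 ∈ Icc 1 (2 * k) := by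
      simp only [Finset.mem_Icc]
      omega
    rw [mem_sdiff, mem_sdiff, h_Icc, h_pair (by grind) i]

end PairedColoring

section Graph

variable {G : SimpleGraph V}

lemma exists_ends_of_colorable_two (hG : G.Colorable 2) :
    ∃ a b : G.edgeSet → V, (∀ e, a e ∈ e.1) ∧ (∀ e, b e ∈ e.1) ∧
      ∀ v, (∀ e : G.edgeSet, v ∈ e.1 ↔ a e = v) ∨ ∀ e : G.edgeSet, v ∈ e.1 ↔ b e = v := by
  obtain ⟨s, t, hst⟩ := IsBipartite.exists_isBipartiteWith hG
  have h_ends (e : G.edgeSet) : ∃ x y, x ∈ s ∧ y ∈ t ∧ e.1 = s(x, y) := by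
    obtain ⟨⟨x, y⟩, hxy⟩ := e
    rcases hst.mem_of_adj hxy with h | h
    · exact ⟨x, y, h.1, h.2, rfl⟩
    · exact ⟨y, x, h.2, h.1, Sym2.eq_swap⟩
  choose a b ha hb hab using h_ends
  refine ⟨a, b, fun e ↦ by simp [hab e], fun e ↦ by simp [hab e], fun v ↦ ?_⟩
  by_cases hv : v ∈ s
  · have hbv (e) : v ≠ b e := hst.disjoint.ne_of_mem hv (hb e)
    exact .inl fun e ↦ by simp [hab e, hbv e, eq_comm]
  · have hav (e) : v ≠ a e := fun h ↦ hv (h ▸ ha e)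
    exact .inr fun e ↦ by simp [hab e, hav e, eq_comm]

lemma card_edges_at_eq_degree [DecidableEq V] [Fintype G.edgeSet] (v : V)
    [Fintype (G.neighborSet v)] : #{e : G.edgeSet | v ∈ e.1} = G.degree v := by
  rw [← card_incidenceFinset_eq_degree, ← card_map (Embedding.subtype _)]
  congr 1
  ext e
  simp [incidenceSet, and_comm]

lemma card_fiber_le_degree [DecidableEq V] [Fintype G.edgeSet] {f : G.edgeSet → V}
    (hf : ∀ e, f e ∈ e.1) (v : V) [Fintype (G.neighborSet v)] :
    #{e | f e = v} ≤ G.degree v := by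
  rw [← card_edges_at_eq_degree]
  exact card_le_card (monotone_filter_right _ fun e _ he ↦ he ▸ hf e)

lemma isCyclicIntervalColoring_extend {n : ℕ} {c : G.edgeSet → ℕ} (hc : ∀ e, c e ∈ Icc 1 n)
    (h_inj : ∀ v, Set.InjOn c {e | v ∈ e.1})
    (h_int : ∀ v, IsIntervalSet (c '' {e | v ∈ e.1}) ∨
      IsIntervalSet (Set.Icc 1 n \ c '' {e | v ∈ e.1})) :
    IsCyclicIntervalColoring G n (extend Subtype.val c 0) := by
  have h_ext (e : G.edgeSet) : extend Subtype.val c 0 e.1 = c e :=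
    Subtype.val_injective.extend_apply c 0 e
  have h_colors (v : V) : colorsAt G (extend Subtype.val c 0) v = c '' {e | v ∈ e.1} := by
    have h_val : G.incidenceSet v = Subtype.val '' {e : G.edgeSet | v ∈ e.1} := by
      ext e
      simp [incidenceSet, and_comm]
    rw [colorsAt, h_val, Set.image_image]
    simp only [h_ext]
  refine ⟨⟨fun e he ↦ ?_, fun e₁ he₁ e₂ he₂ hne ⟨v, hv₁, hv₂⟩ heq ↦ hne ?_⟩, fun v ↦ ?_⟩
  · simpa [h_ext ⟨e, he⟩] using hc ⟨e, he⟩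
  · rw [h_ext ⟨e₁, he₁⟩, h_ext ⟨e₂, he₂⟩] at heq
    exact congrArg Subtype.val (h_inj v hv₁ hv₂ heq)
  · rw [h_colors]
    exact h_int v

end Graph

end Fibers

theorem stmt_4_general {V : Type*} [Fintype V] (G : SimpleGraph V) [DecidableRel G.Adj]
    (hbip : G.Colorable 2) (r : ℕ) (hle : ∀ v, G.degree v ≤ 2 * r)
    (hdeg : ∀ v, G.degree v ≤ 2 ∨ 2 * r ≤ G.degree v + 2) :
    ∃ c : Sym2 V → ℕ, IsCyclicIntervalColoring G (2 * r) c := by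
  classical
  obtain ⟨a, b, ha, hb, hab⟩ := exists_ends_of_colorable_two hbip
  obtain ⟨c, hca, hcb⟩ := exists_isPairedColoring
    (fun v ↦ (card_fiber_le_degree ha v).trans (hle v))
    (fun v ↦ (card_fiber_le_degree hb v).trans (hle v))
  have h_side (v : V) : ∃ f, IsPairedColoring r f c ∧ ∀ e : G.edgeSet, v ∈ e.1 ↔ f e = v :=
    (hab v).elim (fun h ↦ ⟨a, hca, h⟩) fun h ↦ ⟨b, hcb, h⟩
  refine ⟨_, isCyclicIntervalColoring_extend hca.mem_Icc (fun v ↦ ?_) fun v ↦ ?_⟩ <;>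
    obtain ⟨f, hf, hfv⟩ := h_side v
  · simpa only [hfv] using hf.injOnFibers.injOn v
  · have := hdeg v
    simp only [← card_edges_at_eq_degree, hfv] at this ⊢
    exact hf.isIntervalSet_or this

/-- a finite bipartite graph with maximum degree `2r - 1` (`r ≥ 2`) in which
every vertex degree lies in `{1, 2, 2r-2, 2r-1}` has a cyclic interval `t`-coloring for
some `t ≤ 2r`. -/
theorem stmt_4 {V : Type*} [Fintype V] (G : SimpleGraph V) [DecidableRel G.Adj]
    (hbip : G.Colorable 2) (r : ℕ) (hr : 2 ≤ r) (hΔ : G.maxDegree = 2 * r - 1)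
    (hdeg : ∀ v : V, G.degree v ∈ ({1, 2, 2 * r - 2, 2 * r - 1} : Set ℕ)) :
    ∃ t : ℕ, t ≤ 2 * r ∧ ∃ c : Sym2 V → ℕ, IsCyclicIntervalColoring G t c := by
  simp only [Set.mem_insert_iff, Set.mem_singleton_iff] at hdeg
  exact ⟨2 * r, le_rfl, stmt_4_general G hbip r (fun v ↦ by grind) fun v ↦ by grind⟩
end

section
/- Let G be a finite bipartite graph with maximum degree Δ(G) = 4 having no vertices of degree 3. Then G has a proper edge coloring α with colors 1,2,3,4 such that for every vertex v, S(v,α) is an interval of consecutive integers, and moreover for every vertex v of degree 2, either S(v,α) = {1,2} or S(v,α) = {3,4}. -/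
open SimpleGraph

/-!
Call a two-valued labelling of the darts an orientation if it distinguishes `d` from `d.symm`.
For every partition of the darts there is an orientation splitting each part evenly: pair up
the darts inside each part, leaving at most one over; an orientation that also distinguishes the
members of each pair exists because a union of two matchings has no odd cycle.

Orient the graph evenly at each vertex, then orient it again, this time evenly on the outgoing and
on the incoming edges of each vertex of degree greater than `2` separately. Whether the two
orientations of an edge agree does not depend on the direction in which the edge is read. This
splits the edges into two classes, each having at most two edges at a vertex of degree at most `4`,
while both edges at a vertex of degree `2` belong to one class. In a bipartite graph an orientation,
read from one fixed side, is itself a function of the edge, so an even orientation of the two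
classes splits them into matchings, which receive the colors `1, 2` and `3, 4`.
-/

section Involution

open Function

universe u

variable {D K : Type*}

theorem exists_alternating_of_involutive {σ : D → D} (hσ : Involutive σ) (hσ_ne : ∀ d, σ d ≠ d) :
    ∃ f : D → Bool, ∀ d, f (σ d) = !f d := by
  classical
  let _ : LinearOrder D := linearOrderOfSTO WellOrderingRel
  refine ⟨fun d => decide (d < σ d), fun d => ?_⟩
  rcases (hσ_ne d).lt_or_gt with h | h <;> simp [hσ d, h, h.le]

theorem apply_mul_zpow_apply {σ τ : Equiv.Perm D} (hσ : Involutive σ) (hτ : Involutive τ) (n : ℤ)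
    (d : D) : σ (((σ * τ) ^ n) d) = ((σ * τ) ^ (-n)) (σ d) := by
  have hσ_inv : σ⁻¹ = σ := Equiv.ext fun d => σ.injective (by simp [hσ d])
  have hτ_inv : τ⁻¹ = τ := Equiv.ext fun d => τ.injective (by simp [hτ d])
  have hconj : σ * (σ * τ) * σ⁻¹ = (σ * τ)⁻¹ := by
    rw [mul_inv_rev, hτ_inv, hσ_inv]
    ext d
    simp [hσ (τ (σ d))]
  rw [zpow_neg, ← inv_zpow, ← hconj, conj_zpow]
  simp

theorem not_sameCycle_mul_apply {σ τ : Equiv.Perm D} (hσ : Involutive σ) (hτ : Involutive τ)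
    (hσ_ne : ∀ d, σ d ≠ d) (hτ_ne : ∀ d, τ d ≠ d) (d : D) : ¬ (σ * τ).SameCycle d (σ d) := by
  rintro ⟨n, hn⟩
  have apply_zpow (m : ℤ) : σ (((σ * τ) ^ m) d) = ((σ * τ) ^ (n - m)) d := by
    rw [apply_mul_zpow_apply hσ hτ, ← hn, ← Equiv.Perm.mul_apply, ← zpow_add, neg_add_eq_sub]
  -- The midpoint of the alternating path from `d` to `σ d` would be fixed by `σ` or by `τ`.
  rcases Int.even_or_odd' n with ⟨m, rfl | rfl⟩
  · exact hσ_ne _ ((apply_zpow m).trans (by rw [two_mul, add_sub_cancel_right]))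
  · refine hτ_ne (((σ * τ) ^ m) d) (σ.injective ?_)
    rw [apply_zpow, show 2 * m + 1 - m = 1 + m by ring, zpow_one_add]
    rfl

theorem exists_common_alternating_of_fixedPointFree {σ τ : Equiv.Perm D} (hσ : Involutive σ)
    (hτ : Involutive τ) (hσ_ne : ∀ d, σ d ≠ d) (hτ_ne : ∀ d, τ d ≠ d) :
    ∃ f : D → Bool, (∀ d, f (σ d) = !f d) ∧ ∀ d, f (τ d) = !f d := by
  let s : Setoid D := Equiv.Perm.SameCycle.setoid (σ * τ)
  have hσ_map (a b : D) (h : a ≈ b) : σ a ≈ σ b := by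
    obtain ⟨n, rfl⟩ := h
    exact ⟨-n, (apply_mul_zpow_apply hσ hτ n a).symm⟩
  let σ' : Quotient s → Quotient s := Quotient.map σ hσ_map
  obtain ⟨f, hf⟩ := exists_alternating_of_involutive (σ := σ')
    (Quotient.ind fun d => congrArg _ (hσ d))
    (Quotient.ind fun d h => not_sameCycle_mul_apply hσ hτ hσ_ne hτ_ne d (Quotient.exact h.symm))
  have hfσ (d : D) : f ⟦σ d⟧ = !f ⟦d⟧ := hf ⟦d⟧
  refine ⟨fun d => f ⟦d⟧, hfσ, fun d => ?_⟩
  have hστ : (⟦σ (τ d)⟧ : Quotient s) = ⟦d⟧ :=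
    Quotient.sound (Equiv.Perm.sameCycle_apply_left.2 (Equiv.Perm.SameCycle.refl _ d))
  change f ⟦τ d⟧ = !f ⟦d⟧
  rw [← hστ, hfσ, Bool.not_not]

/-- The involution of `D × Bool` that agrees with `σ` on both copies of `D`, except that it
exchanges the two copies of each fixed point. It serves to reduce to involutions without
fixed points. -/
def swapFixedCopies [DecidableEq D] (σ : D → D) (x : D × Bool) : D × Bool :=
  if σ x.1 = x.1 then (x.1, !x.2) else (σ x.1, x.2)

theorem swapFixedCopies_involutive [DecidableEq D] {σ : D → D} (hσ : Involutive σ) :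
    Involutive (swapFixedCopies σ) := by
  rintro ⟨d, b⟩
  by_cases h : σ d = d
  · simp [swapFixedCopies, h]
  · simp [swapFixedCopies, h, hσ d, Ne.symm h]

theorem swapFixedCopies_ne [DecidableEq D] (σ : D → D) (x : D × Bool) :
    swapFixedCopies σ x ≠ x := by
  by_cases h : σ x.1 = x.1 <;> simp [swapFixedCopies, h, Prod.ext_iff]

theorem exists_common_alternating_of_involutive {σ τ : D → D} (hσ : Involutive σ)
    (hτ : Involutive τ) :
    ∃ f : D → Bool, (∀ d, σ d ≠ d → f (σ d) = !f d) ∧ ∀ d, τ d ≠ d → f (τ d) = !f d := by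
  classical
  have hσ' := swapFixedCopies_involutive hσ
  have hτ' := swapFixedCopies_involutive hτ
  obtain ⟨f, hfσ, hfτ⟩ := exists_common_alternating_of_fixedPointFree (σ := hσ'.toPerm)
    (τ := hτ'.toPerm) hσ' hτ' (swapFixedCopies_ne σ) (swapFixedCopies_ne τ)
  refine ⟨fun d => f (d, true), fun d hd => ?_, fun d hd => ?_⟩
  · simpa [swapFixedCopies, hd] using hfσ (d, true)
  · simpa [swapFixedCopies, hd] using hfτ (d, true)

theorem exists_equiv_prod_bool_sum_subsingleton (α : Type u) :
    ∃ β γ : Type u, Subsingleton γ ∧ Nonempty (α ≃ β × Bool ⊕ γ) := by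
  rcases finite_or_infinite α with _ | _
  · have := Fintype.ofFinite α
    refine ⟨ULift (Fin (Fintype.card α / 2)), ULift (Fin (Fintype.card α % 2)), ?_, ?_⟩
    · rw [← Fintype.card_le_one_iff_subsingleton, Fintype.card_ulift, Fintype.card_fin]
      omega
    · rw [← Fintype.card_eq]
      simp [Nat.div_add_mod']
  · refine ⟨α, PEmpty, inferInstance, Cardinal.eq.1 ?_⟩
    simp [Cardinal.mul_eq_left (Cardinal.aleph0_le_mk α)
      (Cardinal.ofNat_le_aleph0.trans (Cardinal.aleph0_le_mk α))]

theorem exists_involutive_subsingleton_fixedPoints (α : Type*) :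
    ∃ τ : α → α, Involutive τ ∧ (fixedPoints τ).Subsingleton := by
  obtain ⟨β, γ, _, ⟨e⟩⟩ := exists_equiv_prod_bool_sum_subsingleton α
  let τ : β × Bool ⊕ γ → β × Bool ⊕ γ := Sum.map (Prod.map id not) id
  have hτ : Involutive τ := by rintro (⟨b, i⟩ | c) <;> simp [τ]
  have fixed_eq_inr {x} (hx : τ x = x) : ∃ c, x = .inr c := by
    rcases x with ⟨b, i⟩ | c <;> simp_all [τ]
  refine ⟨e.symm ∘ τ ∘ e, fun a => by simp [hτ (e a)], fun a ha b hb => ?_⟩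
  obtain ⟨c, hc⟩ := fixed_eq_inr (e.symm_apply_eq.1 ha)
  obtain ⟨c', hc'⟩ := fixed_eq_inr (e.symm_apply_eq.1 hb)
  exact e.injective (by rw [hc, hc', Subsingleton.elim c c'])

theorem exists_fiberwise_involutive (k : D → K) :
    ∃ τ : D → D, Involutive τ ∧ (∀ d, k (τ d) = k d) ∧
      ∀ a, {d | k d = a ∧ τ d = d}.Subsingleton := by
  choose τ hτ hτ_fix using fun a => exists_involutive_subsingleton_fixedPoints {d // k d = a}
  let τ' (d : D) : D := τ (k d) ⟨d, rfl⟩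
  have hτ' {a : K} (d : {d // k d = a}) : τ' d = τ a d := by
    obtain ⟨d, rfl⟩ := d
    rfl
  refine ⟨τ', fun d => ?_, fun d => (τ (k d) ⟨d, rfl⟩).2, ?_⟩
  · rw [hτ' (τ (k d) ⟨d, rfl⟩), hτ]
  · rintro a d ⟨hd, hd_fix⟩ d' ⟨hd', hd'_fix⟩
    exact congrArg Subtype.val <| hτ_fix a (x := ⟨d, hd⟩) (y := ⟨d', hd'⟩)
      (Subtype.ext ((hτ' _).symm.trans hd_fix)) (Subtype.ext ((hτ' _).symm.trans hd'_fix))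

theorem exists_alternating_balanced {σ : D → D} (hσ : Involutive σ) (k : D → K) :
    ∃ o : D → Bool, (∀ d, σ d ≠ d → o (σ d) = !o d) ∧
      ∀ a c, 2 * {d | k d = a ∧ o d = c}.encard ≤ {d | k d = a}.encard + 1 := by
  obtain ⟨τ, hτ, hkτ, hτ_fix⟩ := exists_fiberwise_involutive k
  obtain ⟨o, hoσ, hoτ⟩ := exists_common_alternating_of_involutive hσ hτ
  refine ⟨o, hoσ, fun a c => ?_⟩
  have le_opposite : {d | k d = a ∧ o d = c}.encard ≤ {d | k d = a ∧ o d = !c}.encard + 1 := by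
    rw [← Set.encard_sdiff_add_encard_inter _ {d | τ d = d}]
    apply add_le_add
    · refine Set.encard_le_encard_of_injOn (f := τ) ?_ hτ.injective.injOn
      rintro d ⟨⟨hk, ho⟩, hd⟩
      exact ⟨(hkτ d).trans hk, by rw [hoτ d hd, ho]⟩
    · exact Set.encard_le_one_iff_subsingleton.2
        ((hτ_fix a).anti fun d hd => ⟨hd.1.1, hd.2⟩)
  have split : {d | k d = a}.encard =
      {d | k d = a ∧ o d = c}.encard + {d | k d = a ∧ o d = !c}.encard := by
    rw [← Set.encard_union_eq]
    · congr 1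
      ext d
      cases h : o d <;> cases c <;> simp [h]
    · exact Set.disjoint_left.2 fun d hd hd' => by simp_all
  rw [split, two_mul, add_assoc]
  gcongr

end Involution

section Orientation

open scoped Finset

theorem ne_of_card_filter_le_one {α : Type*} {s : Finset α} {f : α → Bool}
    (hf : ∀ c, #{a ∈ s | f a = c} ≤ 1) {a b : α} (ha : a ∈ s) (hb : b ∈ s) (hab : a ≠ b) :
    f a ≠ f b := fun h =>
  hab (Finset.card_le_one.1 (hf (f b)) a (by simp [ha, h]) b (by simp [hb]))

theorem card_filter_xor_le {α : Type*} {s : Finset α} {f g : α → Bool} {m : ℕ}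
    (hfg : ∀ b c, #{a ∈ s | f a = b ∧ g a = c} ≤ m) (c : Bool) :
    #{a ∈ s | (f a ^^ g a) = c} ≤ 2 * m := by
  classical
  calc #{a ∈ s | (f a ^^ g a) = c}
      ≤ #({a ∈ s | f a = true ∧ g a = !c} ∪ {a ∈ s | f a = false ∧ g a = c}) := by
        refine Finset.card_le_card fun a => ?_
        simp only [Finset.mem_filter, Finset.mem_union]
        rintro ⟨ha, rfl⟩
        cases h : f a <;> simp [ha]
    _ ≤ m + m := (Finset.card_union_le _ _).trans (add_le_add (hfg _ _) (hfg _ _))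
    _ = 2 * m := (two_mul m).symm

variable {V K : Type*} (G : SimpleGraph V)

theorem exists_sym2_eq_of_symm_on_adj {α : Type*} {f : V → V → α}
    (hf : ∀ v w, G.Adj v w → f w v = f v w) :
    ∃ g : Sym2 V → α, ∀ v w, G.Adj v w → g s(v, w) = f v w := by
  refine ⟨fun e => f e.out.1 e.out.2, fun v w h => ?_⟩
  have h_out : s(s(v, w).out.1, s(v, w).out.2) = s(v, w) := Quot.out_eq _
  rcases Sym2.eq_iff.1 h_out with ⟨hv, hw⟩ | ⟨hv, hw⟩ <;> simp only [hv, hw, hf v w h]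

variable [G.LocallyFinite]

theorem encard_dart_fst_eq (v : V) (r : V → V → Prop) [DecidablePred (r v)] :
    {d : G.Dart | d.fst = v ∧ r d.fst d.snd}.encard = #{w ∈ G.neighborFinset v | r v w} := by
  have snd_injOn : Set.InjOn (fun d : G.Dart => d.snd) {d | d.fst = v ∧ r d.fst d.snd} :=
    fun d hd d' hd' h => Dart.ext d d' (Prod.ext (hd.1.trans hd'.1.symm) h)
  rw [← snd_injOn.encard_image, ← Set.encard_coe_eq_coe_finsetCard]
  congr 1
  ext w
  simp only [Set.mem_image, Set.mem_ofPred_eq, Finset.coe_filter, mem_neighborFinset]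
  constructor
  · rintro ⟨d, ⟨rfl, hr⟩, rfl⟩
    exact ⟨d.adj, hr⟩
  · rintro ⟨h, hr⟩
    exact ⟨⟨(v, w), h⟩, ⟨rfl, hr⟩, rfl⟩

theorem exists_balanced_orientation_s5 [DecidableEq K] (k : V → V → K) :
    ∃ o : V → V → Bool, (∀ v w, G.Adj v w → o w v = !o v w) ∧
      ∀ v a c, 2 * #{w ∈ G.neighborFinset v | k v w = a ∧ o v w = c} ≤
        #{w ∈ G.neighborFinset v | k v w = a} + 1 := by
  classical
  obtain ⟨o, ho, ho_balanced⟩ := exists_alternating_balanced (σ := Dart.symm (G := G))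
    Dart.symm_symm fun d => (d.fst, k d.fst d.snd)
  let o' (v w : V) : Bool := if h : G.Adj v w then o ⟨(v, w), h⟩ else false
  have ho' (d : G.Dart) : o d = o' d.fst d.snd := by simp [o', d.adj]
  refine ⟨o', fun v w h => ?_, fun v a c => ?_⟩
  · exact (ho' _).symm.trans ((ho ⟨(v, w), h⟩ (Dart.symm_ne _)).trans (congrArg _ (ho' _)))
  · have := ho_balanced (v, a) c
    simp only [Prod.mk.injEq, and_assoc, ho'] at this
    rw [encard_dart_fst_eq G v fun v w => k v w = a ∧ o' v w = c,
      encard_dart_fst_eq G v fun v w => k v w = a] at this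
    exact_mod_cast this

theorem exists_orientation_pair :
    ∃ o p : V → V → Bool,
      (∀ v w, G.Adj v w → o w v = !o v w) ∧ (∀ v w, G.Adj v w → p w v = !p v w) ∧
      ∀ v, (∀ a, 2 * #{w ∈ G.neighborFinset v | o v w = a} ≤ G.degree v + 1) ∧
        (G.degree v ≤ 2 → ∀ b, 2 * #{w ∈ G.neighborFinset v | p v w = b} ≤ G.degree v + 1) ∧
        (2 < G.degree v → ∀ a b,
          4 * #{w ∈ G.neighborFinset v | o v w = a ∧ p v w = b} ≤ G.degree v + 3) := by
  obtain ⟨o, ho, ho_balanced⟩ := exists_balanced_orientation_s5 G fun _ _ => ()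
  obtain ⟨p, hp, hp_balanced⟩ := exists_balanced_orientation_s5 G
    fun v w => decide (2 < G.degree v) && o v w
  have o_half (v : V) (a : Bool) :
      2 * #{w ∈ G.neighborFinset v | o v w = a} ≤ G.degree v + 1 := by
    simpa using ho_balanced v () a
  refine ⟨o, p, ho, hp, fun v => ⟨o_half v, fun hv b => ?_, fun hv a b => ?_⟩⟩
  · simpa [hv.not_gt] using hp_balanced v false b
  · have p_half := hp_balanced v a b
    simp only [hv, decide_true, Bool.true_and] at p_half
    linarith [o_half v a]

theorem exists_edge_halving :
    ∃ x : Sym2 V → Bool, ∀ v,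
      (∀ m a, G.degree v ≤ 4 * m → #{w ∈ G.neighborFinset v | x s(v, w) = a} ≤ 2 * m) ∧
      (G.degree v ≤ 2 → ∀ w w', G.Adj v w → G.Adj v w' → x s(v, w) = x s(v, w')) := by
  obtain ⟨o, p, ho, hp, hop⟩ := exists_orientation_pair G
  obtain ⟨x, hx⟩ := exists_sym2_eq_of_symm_on_adj G (f := fun v w => o v w ^^ p v w)
    fun v w h => by simp [ho v w h, hp v w h]
  refine ⟨x, fun v => ?_⟩
  obtain ⟨o_half, p_half, op_quarter⟩ := hop v
  refine ⟨fun m a hm => ?_, fun hv w w' hw hw' => ?_⟩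
  · rcases le_or_gt (G.degree v) 2 with hv | hv
    · have := Finset.card_filter_le (G.neighborFinset v) fun w => x s(v, w) = a
      rw [card_neighborFinset_eq_degree] at this
      omega
    · rw [Finset.filter_congr fun w hw => by rw [hx v w ((mem_neighborFinset ..).1 hw)]]
      exact card_filter_xor_le (fun a b => by have := op_quarter hv a b; omega) a
  · rcases eq_or_ne w w' with rfl | hne
    · rfl
    have mem {u : V} (hu : G.Adj v u) : u ∈ G.neighborFinset v := (mem_neighborFinset ..).2 hu
    have o_ne : o v w ≠ o v w' :=
      ne_of_card_filter_le_one (fun a => by have := o_half a; omega) (mem hw) (mem hw') hne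
    have p_ne : p v w ≠ p v w' :=
      ne_of_card_filter_le_one (fun b => by have := p_half hv b; omega) (mem hw) (mem hw') hne
    rw [hx v w hw, hx v w' hw', Bool.eq_not.2 o_ne, Bool.eq_not.2 p_ne, Bool.not_xor_not]

theorem exists_equitable_edge_bicoloring [DecidableEq K] (hG : G.Colorable 2) (k : Sym2 V → K) :
    ∃ y : Sym2 V → Bool, ∀ v a b,
      2 * #{w ∈ G.neighborFinset v | k s(v, w) = a ∧ y s(v, w) = b} ≤
        #{w ∈ G.neighborFinset v | k s(v, w) = a} + 1 := by
  obtain ⟨q, hq, hq_balanced⟩ := exists_balanced_orientation_s5 G fun v w => k s(v, w)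
  let side : G.Coloring Bool := hG.toColoring (by simp)
  have side_adj {v w : V} (h : G.Adj v w) : side w = !side v :=
    Bool.eq_not.2 (side.valid h).symm
  obtain ⟨y, hy⟩ := exists_sym2_eq_of_symm_on_adj G (f := fun v w => q v w ^^ side v)
    fun v w h => by simp [hq v w h, side_adj h]
  refine ⟨y, fun v a b => ?_⟩
  have y_eq_iff {w : V} (hw : w ∈ G.neighborFinset v) :
      y s(v, w) = b ↔ q v w = (b ^^ side v) := by
    rw [hy v w ((mem_neighborFinset ..).1 hw)]
    cases q v w <;> cases b <;> simp
  rw [Finset.filter_congr fun w hw => and_congr_right' (y_eq_iff hw)]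
  exact hq_balanced v a (b ^^ side v)

end Orientation

section EdgeColoring

open scoped Finset

variable {V : Type*} {G : SimpleGraph V} {t : ℕ} {c : Sym2 V → ℕ} {v : V}

theorem colorsAt_eq_image_neighborSet (G : SimpleGraph V) (c : Sym2 V → ℕ) (v : V) :
    colorsAt G c v = (fun w => c s(v, w)) '' G.neighborSet v := by
  ext n
  constructor
  · rintro ⟨e, ⟨he, hv⟩, rfl⟩
    obtain ⟨w, rfl⟩ := Sym2.mem_iff_exists.1 hv
    exact ⟨w, he, rfl⟩
  · rintro ⟨w, hw, rfl⟩
    exact ⟨s(v, w), ⟨hw, Sym2.mem_mk_left v w⟩, rfl⟩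

theorem isProperEdgeColoring_iff_injOn :
    IsProperEdgeColoring G t c ↔ (∀ v w, G.Adj v w → c s(v, w) ∈ Set.Icc 1 t) ∧
      ∀ v, (G.neighborSet v).InjOn fun w => c s(v, w) := by
  refine and_congr Sym2.forall ⟨fun h v w hw w' hw' hc => ?_, ?_⟩
  · by_contra hne
    exact h s(v, w) hw s(v, w') hw' (fun he => hne (Sym2.congr_right.1 he))
      ⟨v, Sym2.mem_mk_left v w, Sym2.mem_mk_left v w'⟩ hc
  · rintro h e₁ he₁ e₂ he₂ hne ⟨v, hv₁, hv₂⟩ hc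
    obtain ⟨w₁, rfl⟩ := Sym2.mem_iff_exists.1 hv₁
    obtain ⟨w₂, rfl⟩ := Sym2.mem_iff_exists.1 hv₂
    exact hne (congrArg _ (h v he₁ he₂ hc))

namespace IsProperEdgeColoring

theorem colorsAt_subset_Icc (hc : IsProperEdgeColoring G t c) : colorsAt G c v ⊆ Set.Icc 1 t :=
  Set.image_subset_iff.2 fun e he => hc.1 e he.1

variable [Fintype (G.neighborSet v)]

theorem ncard_colorsAt (hc : IsProperEdgeColoring G t c) :
    (colorsAt G c v).ncard = G.degree v := by
  rw [colorsAt_eq_image_neighborSet, ((isProperEdgeColoring_iff_injOn.1 hc).2 v).ncard_image,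
    ← coe_neighborFinset, Set.ncard_coe_finset, card_neighborFinset_eq_degree]

theorem colorsAt_eq_of_subset {s : Set ℕ} (hc : IsProperEdgeColoring G t c)
    (hs : colorsAt G c v ⊆ s) (hs_fin : s.Finite) (hs_card : s.ncard ≤ G.degree v) :
    colorsAt G c v = s :=
  Set.eq_of_subset_of_ncard_le hs (hs_card.trans_eq hc.ncard_colorsAt.symm) hs_fin

theorem isIntervalSet_colorsAt_of_degree_le_one (hc : IsProperEdgeColoring G t c)
    (hv : G.degree v ≤ 1) : IsIntervalSet (colorsAt G c v) := by
  have hfin : (colorsAt G c v).Finite := (Set.finite_Icc 1 t).subset hc.colorsAt_subset_Icc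
  rcases (Set.ncard_le_one_iff_eq hfin).1 (hc.ncard_colorsAt.trans_le hv) with h | ⟨n, h⟩
  · exact ⟨1, 0, by simp [h]⟩
  · exact ⟨n, n, by simp [h]⟩

end IsProperEdgeColoring

/-- The color in `{1, 2, 3, 4}` encoding two bits, the first of which selects the pair `{1, 2}` or
`{3, 4}`. -/
def bitsColor (a b : Bool) : ℕ := 1 + 2 * a.toNat + b.toNat

theorem bitsColor_mem_Icc (a b : Bool) : bitsColor a b ∈ Set.Icc 1 4 := by
  cases a <;> cases b <;> simp [bitsColor]

theorem bitsColor_mem_ite (a b : Bool) :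
    bitsColor a b ∈ if a then ({3, 4} : Set ℕ) else {1, 2} := by
  cases a <;> cases b <;> simp [bitsColor]

theorem bitsColor_inj {a b a' b' : Bool} :
    bitsColor a b = bitsColor a' b' ↔ a = a' ∧ b = b' := by
  cases a <;> cases b <;> cases a' <;> cases b' <;> simp [bitsColor]

variable [G.LocallyFinite]

theorem isProperEdgeColoring_bitsColor {x y : Sym2 V → Bool}
    (hxy : ∀ v a b, #{w ∈ G.neighborFinset v | x s(v, w) = a ∧ y s(v, w) = b} ≤ 1) :
    IsProperEdgeColoring G 4 fun e => bitsColor (x e) (y e) := by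
  refine isProperEdgeColoring_iff_injOn.2
    ⟨fun v w _ => bitsColor_mem_Icc _ _, fun v w hw w' hw' h => ?_⟩
  rw [mem_neighborSet, ← mem_neighborFinset] at hw hw'
  exact Finset.card_le_one.1 (hxy v (x s(v, w')) (y s(v, w'))) w
    (by simp [hw, bitsColor_inj.1 h]) w' (by simp [hw'])

theorem exists_isProperEdgeColoring_four (hG : G.Colorable 2) (hdeg : ∀ v, G.degree v ≤ 4) :
    ∃ c : Sym2 V → ℕ, IsProperEdgeColoring G 4 c ∧
      ∀ v, G.degree v = 2 → colorsAt G c v = {1, 2} ∨ colorsAt G c v = {3, 4} := by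
  obtain ⟨x, hx⟩ := exists_edge_halving G
  obtain ⟨y, hy⟩ := exists_equitable_edge_bicoloring G hG x
  have hc := isProperEdgeColoring_bitsColor (G := G) (x := x) (y := y) fun v a b => by
    have := (hx v).1 1 a (hdeg v)
    have := hy v a b
    omega
  refine ⟨_, hc, fun v hv => ?_⟩
  obtain ⟨u, hu⟩ := (G.degree_pos_iff_exists_adj v).1 (by omega)
  have subset : colorsAt G (fun e => bitsColor (x e) (y e)) v ⊆
      if x s(v, u) then {3, 4} else {1, 2} := by
    rw [colorsAt_eq_image_neighborSet]
    rintro _ ⟨w, hw, rfl⟩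
    rw [← (hx v).2 hv.le w u hw hu]
    exact bitsColor_mem_ite _ _
  have colorsAt_eq := hc.colorsAt_eq_of_subset subset
  split_ifs at colorsAt_eq
  · exact .inr (colorsAt_eq (by simp) (by simp [hv]))
  · exact .inl (colorsAt_eq (by simp) (by simp [hv]))

end EdgeColoring

theorem stmt_5_general {V : Type*} (G : SimpleGraph V) [G.LocallyFinite]
    (hbip : G.Colorable 2) (hΔ : ∀ v, G.degree v ≤ 4) (h3 : ∀ v, G.degree v ≠ 3) :
    ∃ c : Sym2 V → ℕ, IsProperEdgeColoring G 4 c ∧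
      (∀ v, IsIntervalSet (colorsAt G c v)) ∧
      (∀ v, G.degree v = 2 →
        colorsAt G c v = ({1, 2} : Set ℕ) ∨ colorsAt G c v = ({3, 4} : Set ℕ)) := by
  obtain ⟨c, hc, hc₂⟩ := exists_isProperEdgeColoring_four hbip hΔ
  refine ⟨c, hc, fun v => ?_, hc₂⟩
  have hv₄ := hΔ v
  have hv₃ := h3 v
  obtain hv | hv | hv : G.degree v ≤ 1 ∨ G.degree v = 2 ∨ G.degree v = 4 := by omega
  · exact hc.isIntervalSet_colorsAt_of_degree_le_one hv
  · rcases hc₂ v hv with h | h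
    · refine ⟨1, 2, h.trans (Set.ext fun n => ?_)⟩
      simp only [Set.mem_insert_iff, Set.mem_singleton_iff, Set.mem_Icc]
      omega
    · refine ⟨3, 4, h.trans (Set.ext fun n => ?_)⟩
      simp only [Set.mem_insert_iff, Set.mem_singleton_iff, Set.mem_Icc]
      omega
  · exact ⟨1, 4,
      hc.colorsAt_eq_of_subset hc.colorsAt_subset_Icc (Set.finite_Icc 1 4) (by simp [hv])⟩

/-- a finite bipartite graph with maximum degree `4` and no vertices of
degree `3` has an interval `4`-coloring in which every vertex of degree `2` sees the
colors `{1,2}` or the colors `{3,4}`. -/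
theorem stmt_5 {V : Type*} [Fintype V] (G : SimpleGraph V) [DecidableRel G.Adj]
    (hbip : G.Colorable 2) (hΔ : G.maxDegree = 4) (h3 : ∀ v : V, G.degree v ≠ 3) :
    ∃ c : Sym2 V → ℕ, IsProperEdgeColoring G 4 c ∧
      (∀ v : V, IsIntervalSet (colorsAt G c v)) ∧
      (∀ v : V, G.degree v = 2 →
        colorsAt G c v = ({1, 2} : Set ℕ) ∨ colorsAt G c v = ({3, 4} : Set ℕ)) := by
  exact stmt_5_general G hbip (fun v => hΔ ▸ G.degree_le_maxDegree v) h3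
end
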